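/- arXiv:2512.07106 — 4 statements merged into one kernel-verified Lean document; each statement's English description precedes it below -/
import Mathlib

section
/- Let K and L be countably infinite fields (with the discrete topology) such that their multiplicative groups K* and L* are isomorphic, and let ρ : K* → L* be a group isomorphism. Suppose the ergodic K*-actions on (K̂, m_{K̂}) (the dual action) and on (L̂, m_{L̂}) (the dual action via ρ) are not disjoint. Then K and L are isomorphic as fields; more precisely, there exists a group homomorphism w : K* → L* with finite image such that the map κ : K → L defined by κ(0) = 0 and κ(x) = w(x)ρ(x) for x ∈ K* is a field isomorphism. Furthermore, every non-trivial K*-invariant and K*-ergodic coupling of (K̂, m_{K̂}) and (L̂, m_{L̂}) has the form (e, b*)_*μ for some b ∈ L*, where μ(f) = (1/|Im(w)|) Σ_{c ∈ Im(w)} ∫_{L̂} f(κ*(η), c*η) dm_{L̂}(η) for continuous f on K̂ × L̂, and κ* : L̂ → K̂, η ↦ η ∘ κ, is the isomorphism induced by κ. -/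
open MeasureTheory Filter
open scoped ENNReal

noncomputable section

abbrev AddDual (K : Type*) [AddCommGroup K] [TopologicalSpace K] : Type _ :=
  PontryaginDual (Multiplicative K)

def dualComp {A B : Type*} [AddCommGroup A] [AddCommGroup B]
    [TopologicalSpace A] [DiscreteTopology A] [TopologicalSpace B]
    (f : A →+ B) (ξ : AddDual B) : AddDual A :=
  ξ.comp ⟨AddMonoidHom.toMultiplicative f, continuous_of_discreteTopology⟩

def dualSmul {K : Type*} [Field K] [TopologicalSpace K] [DiscreteTopology K]
    (a : K) (ξ : AddDual K) : AddDual K :=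
  dualComp (AddMonoidHom.mulLeft a) ξ

def IsErgodicFamily {X : Type*} [MeasurableSpace X] {ι : Sort*}
    (T : ι → X → X) (μ : Measure X) : Prop :=
  ∀ s : Set X, MeasurableSet s → (∀ i, T i ⁻¹' s = s) → μ s = 0 ∨ μ s = 1

set_option linter.unusedSectionVars false

/-- Two additive maps with ratio in a finite set are proportional. -/
theorem ratio_const {K L : Type*} [Field K] [Infinite K] [Field L] (A c : K → L)
    (C : Set L) (hC : C.Finite) (hc : ∀ x, x ≠ 0 → c x ∈ C)
    (hA : ∀ x y, A (x + y) = A x + A y) (hA0 : ∀ x, x ≠ 0 → A x ≠ 0)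
    (hB : ∀ x y, c (x + y) * A (x + y) = c x * A x + c y * A y) :
    ∀ x y, x ≠ 0 → y ≠ 0 → c x = c y := by
  have hinj : Function.Injective A := by
    intro x y hxy
    by_contra hne
    apply hA0 (x - y) (sub_ne_zero.2 hne)
    have := hA (x - y) y
    rw [sub_add_cancel] at this
    rw [hxy] at this
    simpa using this.symm
  have key : ∀ x, x ≠ 0 → ∀ᶠ y in cofinite, c y = c x := by
    intro x hx
    let E : Set L := (fun p : (L × L) × L => (p.1.1 - p.1.2) / (p.2 - p.1.1) * A x) '' ((C ×ˢ C) ×ˢ C)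
    have hE : E.Finite := ((hC.prod hC).prod hC).image _
    have h1 : ∀ᶠ y in cofinite, A y ∉ E := by
      have := hinj.tendsto_cofinite.eventually (hE.compl_mem_cofinite)
      exact this
    have h2 : ∀ᶠ y : K in cofinite, y ≠ 0 := (Set.finite_singleton (0 : K)).compl_mem_cofinite
    have h3 : ∀ᶠ y in cofinite, y ≠ -x := (Set.finite_singleton (-x : K)).compl_mem_cofinite
    filter_upwards [h1, h2, h3] with y hy hy0 hyx
    have hxy : x + y ≠ 0 := fun h => hyx (by linear_combination h)
    have e : (c (x + y) - c x) * A x = (c y - c (x + y)) * A y := by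
      have := hB x y
      rw [hA] at this
      linear_combination this
    have e2 : c y = c (x + y) := by
      by_contra hne
      apply hy
      refine ⟨((c (x+y), c x), c y), ⟨⟨hc _ hxy, hc _ hx⟩, hc _ hy0⟩, ?_⟩
      have : c y - c (x + y) ≠ 0 := sub_ne_zero.2 hne
      field_simp
      simpa using e
    rw [e2, sub_self, zero_mul] at e
    have := (mul_eq_zero.1 e).resolve_right (hA0 x hx)
    rw [e2]; exact sub_eq_zero.1 this
  intro x y hx hy
  obtain ⟨z, hz1, hz2⟩ := ((key x hx).and (key y hy)).exists
  rw [← hz1, hz2]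

/-- finitely many choices along an ultrafilter -/
theorem ultra_choice {K L : Type*} (U : Ultrafilter K) (F : Set L) (hF : F.Finite)
    (P : K → L → L → Prop) (h : ∀ᶠ k in U, ∃ s ∈ F, ∃ s' ∈ F, P k s s') :
    ∃ s ∈ F, ∃ s' ∈ F, ∀ᶠ k in U, P k s s' := by
  rw [Ultrafilter.eventually_exists_mem_iff hF] at h
  obtain ⟨s, hs, h⟩ := h
  rw [Ultrafilter.eventually_exists_mem_iff hF] at h
  obtain ⟨s', hs', h⟩ := h
  exact ⟨s, hs, s', hs', h⟩

theorem alg_additive {K L : Type*} [Field K] [Infinite K] [Field L] (R : K → L)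
    (hR0 : R 0 = 0) (hRmul : ∀ x y, R (x * y) = R x * R y) (hRinj : Function.Injective R)
    (F : Set L) (hF : F.Finite) (hF0 : ∀ s ∈ F, s ≠ 0)
    (h : ∀ a b : K, a ≠ 0 → b ≠ 0 → a + b ≠ 0 →
      ∃ s ∈ F, ∃ s' ∈ F, R (a + b) = s * R a + s' * R b) :
    ∃ (r : K → L) (C : Set L), C.Finite ∧ (∀ x, r x ∈ C ∧ r x ≠ 0) ∧
      ∀ x y, r (x + y) * R (x + y) = r x * R x + r y * R y := by
  classical
  have hRne : ∀ x, x ≠ 0 → R x ≠ 0 := fun x hx h0 => hx (hRinj (h0.trans hR0.symm))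
  let U := hyperfilter K
  have hU : ∀ S : Set K, S.Finite → ∀ᶠ k in (U : Filter K), k ∉ S := fun S hS =>
    Filter.hyperfilter_le_cofinite hS.compl_mem_cofinite
  have hUne : ∀ x : K, ∀ᶠ k in (U : Filter K), k ≠ x := fun x => by
    simpa using hU {x} (Set.finite_singleton x)
  -- two affine expressions agreeing for generic k
  have huniq : ∀ p q p' q' : L, (∀ᶠ k in (U : Filter K), p * R k + q = p' * R k + q') →
      p = p' ∧ q = q' := by
    intro p q p' q' hk
    obtain ⟨k, hk1⟩ := hk.exists
    obtain ⟨k', hk2, hne⟩ := (hk.and (hUne k)).exists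
    have hd : R k' - R k ≠ 0 := sub_ne_zero.2 fun h => hne (hRinj h)
    have : (p - p') * (R k' - R k) = 0 := by linear_combination hk2 - hk1
    have hp : p = p' := sub_eq_zero.1 ((mul_eq_zero.1 this).resolve_right hd)
    refine ⟨hp, ?_⟩
    subst hp
    exact add_left_cancel hk1
  have hs : ∀ l : K, ∃ s s' : L, l ≠ 0 → s ∈ F ∧ s' ∈ F ∧
      ∀ᶠ k in (U : Filter K), R (k + l) = s * R k + s' * R l := by
    intro l
    by_cases hl : l = 0
    · exact ⟨0, 0, fun h => absurd hl h⟩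
    obtain ⟨s, hs, s', hs', hh⟩ := ultra_choice U F hF
      (fun k s s' => R (k + l) = s * R k + s' * R l) (by
        filter_upwards [hUne 0, hUne (-l)] with k hk hkl
        exact h k l hk hl (fun h => hkl (by linear_combination h)))
    exact ⟨s, s', fun _ => ⟨hs, hs', hh⟩⟩
  choose s s' hss using hs
  let T : Set L := (fun p : (L × L) × L => p.1.1 / (p.1.2 * p.2)) '' ((F ×ˢ F) ×ˢ F)
  have hT : T.Finite := ((hF.prod hF).prod hF).image _
  let Rt : Set L := (fun p : L × L => p.1 / p.2) '' (F ×ˢ F)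
  have hRt : Rt.Finite := (hF.prod hF).image _
  let r : K → L := fun x => if x = 0 then 1 else s' x / s x
  have hr : ∀ x, x ≠ 0 → r x = s' x / s x := fun x hx => by simp [r, hx]
  have hrR : ∀ x, x ≠ 0 → r x ∈ Rt := fun x hx => by
    rw [hr x hx]; exact ⟨(s' x, s x), ⟨(hss x hx).2.1, (hss x hx).1⟩, rfl⟩
  -- half-additivity
  have half : ∀ x y, x ≠ 0 → y ≠ 0 → x + y ≠ 0 →
      ∃ t ∈ T, r (x + y) * R (x + y) = r x * R x + t * R y := by
    intro x y hx hy hxy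
    obtain ⟨σ, hσ, σ', hσ', hh⟩ := ultra_choice U F hF
      (fun k σ σ' => R ((k + x) + y) = σ * R (k + x) + σ' * R y) (by
        filter_upwards [hUne (-x), hUne (-(x + y))] with k hk hkl
        exact h (k + x) y (fun h => hk (by linear_combination h)) hy
          (fun h => hkl (by linear_combination h)))
    have e := huniq (s (x + y)) (s' (x + y) * R (x + y)) (σ * s x) (σ * s' x * R x + σ' * R y) (by
      filter_upwards [hh, (hss x hx).2.2, (hss (x + y) hxy).2.2] with k h1 h2 h3
      rw [← h3, ← add_assoc, h1, h2]; ring)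
    refine ⟨σ' / (σ * s x), ⟨((σ', σ), s x), ⟨⟨hσ', hσ⟩, (hss x hx).1⟩, rfl⟩, ?_⟩
    rw [hr (x + y) hxy, hr x hx, e.1]
    have n1 := hF0 _ hσ
    have n2 := hF0 _ (hss x hx).1
    field_simp
    linear_combination e.2
  have gen : ∀ x, ∀ᶠ y in cofinite, r (x + y) * R (x + y) = r x * R x + r y * R y := by
    intro x
    by_cases hx : x = 0
    · subst hx
      exact Eventually.of_forall fun y => by simp [hR0]
    let E : Set L := (fun p : (L × L) × (L × L) => (p.1.1 - p.1.2) / (p.2.1 - p.2.2) * R x) ''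
      ((Rt ×ˢ T) ×ˢ (Rt ×ˢ T))
    have hE : E.Finite := ((hRt.prod hT).prod (hRt.prod hT)).image _
    have h1 : ∀ᶠ y in cofinite, R y ∉ E := hRinj.tendsto_cofinite.eventually hE.compl_mem_cofinite
    have h2 : ∀ᶠ y : K in cofinite, y ≠ 0 := (Set.finite_singleton (0 : K)).compl_mem_cofinite
    have h3 : ∀ᶠ y in cofinite, y ≠ -x := (Set.finite_singleton (-x : K)).compl_mem_cofinite
    filter_upwards [h1, h2, h3] with y hy hy0 hyx
    have hxy : x + y ≠ 0 := fun h => hyx (by linear_combination h)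
    obtain ⟨t, ht, e1⟩ := half x y hx hy0 hxy
    obtain ⟨t', ht', e2⟩ := half y x hy0 hx (by rwa [add_comm])
    rw [add_comm y x] at e2
    have e : (r x - t') * R x = (r y - t) * R y := by linear_combination e2 - e1
    have : r y = t := by
      by_contra hne
      apply hy
      refine ⟨((r x, t'), (r y, t)), ⟨⟨hrR x hx, ht'⟩, ⟨hrR y hy0, ht⟩⟩, ?_⟩
      have : r y - t ≠ 0 := sub_ne_zero.2 hne
      field_simp
      simpa using e
    rw [e1, this]
  refine ⟨r, insert 1 Rt, hRt.insert 1, ?_, ?_⟩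
  · intro x
    by_cases hx : x = 0
    · simp [r, hx]
    refine ⟨Or.inr (hrR x hx), ?_⟩
    rw [hr x hx]
    exact div_ne_zero (hF0 _ (hss x hx).2.1) (hF0 _ (hss x hx).1)
  · intro x y
    have g3 : ∀ᶠ z in cofinite, r (x + (y + z)) * R (x + (y + z)) =
        r x * R x + r (y + z) * R (y + z) :=
      (add_right_injective y).tendsto_cofinite.eventually (gen x)
    obtain ⟨z, ⟨z1, z2⟩, z3⟩ := (((gen (x + y)).and (gen y)).and g3).exists
    rw [← add_assoc] at z3
    linear_combination z3 - z1 + z2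

theorem alg_lemma {K L : Type*} [Field K] [Infinite K] [Field L] (ρ : Kˣ ≃* Lˣ)
    (F : Set L) (hF : F.Finite) (hF0 : ∀ s ∈ F, s ≠ 0)
    (h : ∀ a b c : Kˣ, (a : K) + b = c →
      ∃ s ∈ F, ∃ s' ∈ F, (ρ c : L) = s * ρ a + s' * ρ b) :
    ∃ (w : Kˣ →* Lˣ) (κ : K ≃+* L), (Set.range w).Finite ∧
      ∀ x : Kˣ, κ (x : K) = (w x : L) * (ρ x : L) := by
  classical
  let R : K → L := fun x => if hx : x = 0 then 0 else ρ (Units.mk0 x hx)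
  have hR0 : R 0 = 0 := by simp [R]
  have hRu : ∀ x : Kˣ, R x = ρ x := fun x => by simp [R]
  have hRmul : ∀ x y, R (x * y) = R x * R y := by
    intro x y
    by_cases hx : x = 0
    · simp [hx, hR0]
    by_cases hy : y = 0
    · simp [hy, hR0]
    have := hRu (Units.mk0 x hx * Units.mk0 y hy)
    rw [map_mul] at this
    simpa [R, hx, hy] using this
  have hRne : ∀ x, x ≠ 0 → R x ≠ 0 := fun x hx => by simp [R, hx]
  have hRinj : Function.Injective R := by
    intro x y hxy
    by_cases hx : x = 0
    · by_contra hne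
      rw [hx, hR0] at hxy
      exact hRne y (fun h => hne (hx.trans h.symm)) hxy.symm
    by_cases hy : y = 0
    · rw [hy, hR0] at hxy
      exact absurd hxy (hRne x hx)
    have := hRu (Units.mk0 x hx)
    have h2 := hRu (Units.mk0 y hy)
    simp only [Units.val_mk0] at this h2
    rw [this, h2] at hxy
    have := ρ.injective (Units.ext hxy)
    simpa using congrArg Units.val this
  obtain ⟨r, C, hC, hrC, hadd⟩ := alg_additive R hR0 hRmul hRinj F hF hF0 (by
    intro a b ha hb hab
    have := h (Units.mk0 a ha) (Units.mk0 b hb) (Units.mk0 _ hab) rfl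
    simpa [← hRu] using this)
  let κ₀ : K → L := fun x => r x * R x
  have hκ0 : ∀ x, x ≠ 0 → κ₀ x ≠ 0 := fun x hx => mul_ne_zero (hrC x).2 (hRne x hx)
  have hrat : ∀ a, a ≠ 0 → ∀ x, x ≠ 0 → r (a * x) / r x = r a / r 1 := by
    intro a ha x hx
    let D : Set L := (fun p : L × L => p.1 / p.2) '' (C ×ˢ C)
    have := ratio_const κ₀ (fun x => r (a * x) / r x) D ((hC.prod hC).image _)
      (fun x _ => ⟨(r (a * x), r x), ⟨(hrC _).1, (hrC _).1⟩, rfl⟩) hadd hκ0 (by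
        intro x y
        have e : ∀ z, r (a * z) / r z * κ₀ z = r (a * z) * R (a * z) / R a := by
          intro z
          have := (hrC z).2
          have := hRne a ha
          simp only [κ₀, hRmul]
          field_simp
        rw [e, e, e, mul_add, hadd]
        ring) x 1 hx one_ne_zero
    simpa using this
  let W : Kˣ → Lˣ := fun x => Units.mk0 (r x / r 1) (div_ne_zero (hrC _).2 (hrC _).2)
  have hr1 := (hrC 1).2
  let w : Kˣ →* Lˣ :=
    { toFun := W
      map_one' := by ext; simp [W, hr1]
      map_mul' := fun x y => by
        ext
        have := hrat x x.ne_zero y y.ne_zero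
        have := (hrC y).2
        simp only [W, Units.val_mul, Units.val_mk0]
        field_simp at *
        assumption }
  have hw : ∀ x, (w x : L) = r x / r 1 := fun x => rfl
  have hR1 : R 1 = 1 := by simpa using hRu 1
  let k : K →+* L :=
    { toFun := fun x => κ₀ x / r 1
      map_zero' := by simp [κ₀, hR0]
      map_one' := by simp [κ₀, hR1, hr1]
      map_add' := fun x y => by rw [← add_div]; exact congrArg (· / r 1) (hadd x y)
      map_mul' := fun x y => by
        by_cases hx : x = 0
        · simp [hx, κ₀, hR0]
        by_cases hy : y = 0
        · simp [hy, κ₀, hR0]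
        have := hrat x hx y hy
        have := (hrC y).2
        simp only [κ₀, hRmul]
        have e : r (x * y) = r x * r y / r 1 := by field_simp at *; assumption
        rw [e]; field_simp }
  have hk : ∀ x : Kˣ, k (x : K) = (w x : L) * (ρ x : L) := by
    intro x
    change r x * R x / r 1 = _
    rw [hw, hRu]; ring
  have hfin : (Set.range w).Finite := by
    refine Set.Finite.of_finite_image (f := Units.val) ?_ (Units.val_injective.injOn)
    refine ((hC.image (fun c => c / r 1))).subset ?_
    rintro _ ⟨_, ⟨x, rfl⟩, rfl⟩
    exact ⟨r x, (hrC x).1, rfl⟩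
  have hsurj : Function.Surjective k := by
    intro b
    by_cases hb : ∃ y, b + k y = 0
    · obtain ⟨y, hy⟩ := hb
      exact ⟨-y, by rw [map_neg]; linear_combination -hy⟩
    push Not at hb
    have hex : ∀ y : K, ∃ x : Kˣ, (b + k y) = (w x : L)⁻¹ * k x := by
      intro y
      refine ⟨ρ.symm (Units.mk0 _ (hb y)), ?_⟩
      rw [hk]
      simp
    choose x hx using hex
    have : ∃ y y', y ≠ y' ∧ w (x y) = w (x y') := by
      have hfin' : Finite (Set.range w) := hfin
      obtain ⟨y, y', hne, he⟩ := Finite.exists_ne_map_eq_of_infinite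
        (fun y : K => (⟨w (x y), Set.mem_range_self _⟩ : Set.range w))
      exact ⟨y, y', hne, by simpa using he⟩
    obtain ⟨y, y', hne, he⟩ := this
    have h1 := hx y
    have h2 := hx y'
    rw [← he] at h2
    have hk1 : k (y - y') ≠ 0 := by
      rw [Ne, map_eq_zero]; exact sub_ne_zero.2 hne
    have hwi : (w (x y) : L) ≠ 0 := Units.ne_zero _
    have e : (w (x y) : L)⁻¹ * k (x y - x y') = k (y - y') := by
      rw [map_sub, map_sub]; linear_combination h2 - h1
    have hk2 : k ((x y : K) - x y') ≠ 0 := fun h0 => hk1 (by rw [← e, h0, mul_zero])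
    refine ⟨(y - y') / (x y - x y') * x y - y, ?_⟩
    rw [map_sub, map_mul, map_div₀, ← e, mul_div_cancel_right₀ _ hk2, ← h1]
    ring
  refine ⟨w, RingEquiv.ofBijective k ⟨k.injective, hsurj⟩, hfin, fun x => ?_⟩
  exact hk x

theorem span_approx {X ι : Type*} [TopologicalSpace X] [CompactSpace X] (e : ι → C(X, ℂ))
    (hmul : ∀ i j, ∃ k, e k = e i * e j) (hone : ∃ k, e k = 1)
    (hstar : ∀ i, ∃ k, e k = star (e i)) (hsep : ∀ x y, x ≠ y → ∃ i, e i x ≠ e i y)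
    (f : C(X, ℂ)) (ε : ℝ) (hε : 0 < ε) :
    ∃ p ∈ Submodule.span ℂ (Set.range e), ‖f - p‖ < ε := by
  have hd := ContinuousMap.starSubalgebra_topologicalClosure_eq_top_of_separatesPoints
    (StarAlgebra.adjoin ℂ (Set.range e)) (by
      intro x y hxy
      obtain ⟨i, hi⟩ := hsep x y hxy
      exact ⟨e i, ⟨e i, StarAlgebra.subset_adjoin ℂ _ ⟨i, rfl⟩, rfl⟩, hi⟩)
  have hf : f ∈ (StarAlgebra.adjoin ℂ (Set.range e)).topologicalClosure := by
    rw [hd]; trivial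
  rw [← SetLike.mem_coe, StarSubalgebra.topologicalClosure_coe, Metric.mem_closure_iff] at hf
  obtain ⟨p, hp, hd⟩ := hf ε hε
  refine ⟨p, ?_, by rwa [← dist_eq_norm]⟩
  have h2 := StarAlgebra.adjoin_eq_span (R := ℂ) (Set.range e)
  have h3 : Submonoid.closure (Set.range e ∪ star (Set.range e)) ≤
      ({ carrier := Set.range e, mul_mem' := by
          rintro _ _ ⟨i, rfl⟩ ⟨j, rfl⟩; exact hmul i j
         one_mem' := hone } : Submonoid C(X, ℂ)) := by
    rw [Submonoid.closure_le]
    rintro x (hx | hx)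
    · exact hx
    · obtain ⟨i, hi⟩ := hx
      obtain ⟨k, hk⟩ := hstar i
      exact ⟨k, by rw [hk, hi, star_star]⟩
  have h4 : p ∈ Submodule.span ℂ (Submonoid.closure (Set.range e ∪ star (Set.range e)) : Set C(X, ℂ)) := by
    rw [← h2]; exact hp
  exact Submodule.span_mono h3 h4

theorem integrable_cont {X : Type*} [TopologicalSpace X] [CompactSpace X] [MeasurableSpace X]
    [BorelSpace X] [SecondCountableTopology X] (μ : Measure X) [IsFiniteMeasure μ] (f : X → ℂ) (hf : Continuous f) :
    Integrable f μ := by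
  obtain ⟨C, hC⟩ := isCompact_univ.exists_bound_of_continuousOn hf.continuousOn
  exact Integrable.of_bound hf.aestronglyMeasurable C (Eventually.of_forall fun x => hC x trivial)

theorem fourier_unique {X ι : Type*} [TopologicalSpace X] [CompactSpace X] [MeasurableSpace X]
    [BorelSpace X] [PolishSpace X] (e : ι → C(X, ℂ))
    (hmul : ∀ i j, ∃ k, e k = e i * e j) (hone : ∃ k, e k = 1)
    (hstar : ∀ i, ∃ k, e k = star (e i)) (hsep : ∀ x y, x ≠ y → ∃ i, e i x ≠ e i y)
    (μ ν : Measure X) [IsFiniteMeasure μ] [IsFiniteMeasure ν]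
    (h : ∀ i, ∫ x, e i x ∂μ = ∫ x, e i x ∂ν) : μ = ν := by
  let _ := TopologicalSpace.upgradeIsCompletelyMetrizable X
  have hspan : ∀ p ∈ Submodule.span ℂ (Set.range e), ∫ x, p x ∂μ = ∫ x, p x ∂ν := by
    intro p hp
    induction hp using Submodule.span_induction with
    | mem x hx => obtain ⟨i, rfl⟩ := hx; exact h i
    | zero => simp
    | add x y _ _ hx hy =>
      simp only [ContinuousMap.add_apply]
      rw [integral_add (integrable_cont _ _ x.continuous) (integrable_cont _ _ y.continuous),
        integral_add (integrable_cont _ _ x.continuous) (integrable_cont _ _ y.continuous), hx, hy]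
    | smul a x _ hx =>
      simp only [ContinuousMap.smul_apply]
      rw [integral_smul, integral_smul, hx]
  have hall : ∀ f : C(X, ℂ), ∫ x, f x ∂μ = ∫ x, f x ∂ν := by
    intro f
    by_contra hne
    have hd : 0 < dist (∫ x, f x ∂μ) (∫ x, f x ∂ν) := dist_pos.2 hne
    set D := dist (∫ x, f x ∂μ) (∫ x, f x ∂ν)
    obtain ⟨p, hp, hfp⟩ := span_approx e hmul hone hstar hsep f (D / (μ.real Set.univ + ν.real Set.univ + 1)) (by positivity)
    have key : ∀ (τ : Measure X) [IsFiniteMeasure τ], dist (∫ x, f x ∂τ) (∫ x, p x ∂τ) ≤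
        (D / (μ.real Set.univ + ν.real Set.univ + 1)) * τ.real Set.univ := by
      intro τ _
      rw [dist_eq_norm, ← integral_sub (integrable_cont _ _ f.continuous) (integrable_cont _ _ p.continuous)]
      refine norm_integral_le_of_norm_le_const (Eventually.of_forall fun x => ?_)
      exact ((f - p).norm_coe_le_norm x).trans hfp.le
    have h1 := key μ
    have h2 := key ν
    rw [← hspan p hp] at h2
    have h3 := dist_triangle_right (∫ x, f x ∂μ) (∫ x, f x ∂ν) (∫ x, p x ∂μ)
    have h4 : D ≤ (D / (μ.real Set.univ + ν.real Set.univ + 1)) * (μ.real Set.univ + ν.real Set.univ) := by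
      rw [mul_add]; linarith
    have h5 : 0 ≤ μ.real Set.univ + ν.real Set.univ := by positivity
    rw [div_mul_eq_mul_div, le_div_iff₀ (by positivity)] at h4
    nlinarith
  refine ext_of_forall_integral_eq_of_IsFiniteMeasure fun f => ?_
  have := hall ⟨fun x => (f x : ℂ), by fun_prop⟩
  simp only [ContinuousMap.coe_mk] at this
  rw [integral_complex_ofReal, integral_complex_ofReal] at this
  exact_mod_cast this

/-- L¹ approximation. -/
theorem l1_approx {X ι : Type*} [TopologicalSpace X] [CompactSpace X] [MeasurableSpace X]
    [BorelSpace X] [PolishSpace X] (e : ι → C(X, ℂ))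
    (hmul : ∀ i j, ∃ k, e k = e i * e j) (hone : ∃ k, e k = 1)
    (hstar : ∀ i, ∃ k, e k = star (e i)) (hsep : ∀ x y, x ≠ y → ∃ i, e i x ≠ e i y)
    (μ : Measure X) [IsProbabilityMeasure μ] (g : X → ℂ) (hg : Integrable g μ) (ε : ℝ) (hε : 0 < ε) :
    ∃ p ∈ Submodule.span ℂ (Set.range e), ∫ x, ‖g x - p x‖ ∂μ ≤ ε := by
  let _ := TopologicalSpace.upgradeIsCompletelyMetrizable X
  obtain ⟨f, hf, hfi⟩ := hg.exists_boundedContinuous_integral_sub_le (half_pos hε)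
  obtain ⟨p, hp, hfp⟩ := span_approx e hmul hone hstar hsep f.toContinuousMap (ε / 2) (half_pos hε)
  refine ⟨p, hp, ?_⟩
  have hpi := integrable_cont μ _ p.continuous
  calc ∫ x, ‖g x - p x‖ ∂μ ≤ ∫ x, (‖g x - f x‖ + ε / 2) ∂μ := by
        refine integral_mono (hg.sub hpi).norm ((hg.sub hfi).norm.add (integrable_const _)) fun x => ?_
        have := (f.toContinuousMap - p).norm_coe_le_norm x
        have h2 : g x - p x = (g x - f x) + (f x - p x) := by ring
        simp only [ContinuousMap.sub_apply] at this
        rw [h2]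
        refine (norm_add_le _ _).trans ?_
        have : ‖f x - p x‖ ≤ ε / 2 := this.trans hfp.le
        simpa using this
    _ = (∫ x, ‖g x - f x‖ ∂μ) + ε / 2 := by
        rw [integral_add (f := fun x => ‖g x - f x‖) (hg.sub hfi).norm (integrable_const _)]; simp
    _ ≤ ε := by linarith

theorem ae_zero_of_coeff {X ι : Type*} [TopologicalSpace X] [CompactSpace X] [MeasurableSpace X]
    [BorelSpace X] [PolishSpace X] (e : ι → C(X, ℂ))
    (hmul : ∀ i j, ∃ k, e k = e i * e j) (hone : ∃ k, e k = 1)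
    (hstar : ∀ i, ∃ k, e k = star (e i)) (hsep : ∀ x y, x ≠ y → ∃ i, e i x ≠ e i y)
    (μ : Measure X) [IsProbabilityMeasure μ] (g : X → ℂ) (hgm : AEStronglyMeasurable g μ)
    (C : ℝ) (hC : ∀ x, ‖g x‖ ≤ C)
    (h : ∀ i, ∫ x, g x * e i x ∂μ = 0) : g =ᵐ[μ] 0 := by
  have hC0 : 0 ≤ C := by
    obtain ⟨x⟩ : Nonempty X := μ.nonempty_of_neZero
    exact (norm_nonneg _).trans (hC x)
  have hg : Integrable g μ := Integrable.of_bound hgm C (Eventually.of_forall hC)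
  have hgc : ∀ f : X → ℂ, Integrable f μ → Integrable (fun x => g x * f x) μ := fun f hf =>
    hf.bdd_mul hgm (Eventually.of_forall hC)
  have hspan : ∀ p ∈ Submodule.span ℂ (Set.range e), ∫ x, g x * p x ∂μ = 0 := by
    intro p hp
    induction hp using Submodule.span_induction with
    | mem x hx => obtain ⟨i, rfl⟩ := hx; exact h i
    | zero => simp
    | add x y _ _ hx hy =>
      simp only [ContinuousMap.add_apply, mul_add]
      rw [integral_add (hgc _ (integrable_cont _ _ x.continuous)) (hgc _ (integrable_cont _ _ y.continuous)), hx, hy, add_zero]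
    | smul a x _ hx =>
      simp only [ContinuousMap.smul_apply, mul_smul_comm]
      rw [integral_smul, hx, smul_zero]
  have hgs : Integrable (fun x => star (g x)) μ :=
    Integrable.of_bound hgm.star C (Eventually.of_forall fun x => by rw [norm_star]; exact hC x)
  have hz : ∫ x, ‖g x‖ ^ 2 ∂μ = 0 := by
    have hpos : 0 ≤ ∫ x, ‖g x‖ ^ 2 ∂μ := integral_nonneg fun x => by positivity
    refine le_antisymm (le_of_forall_pos_le_add fun ε hε => ?_) hpos
    obtain ⟨p, hp, hpe⟩ := l1_approx e hmul hone hstar hsep μ _ hgs (ε / (C + 1)) (by positivity)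
    have hpi := integrable_cont μ _ p.continuous
    have e1 : ((∫ x, ‖g x‖ ^ 2 ∂μ : ℝ) : ℂ) = ∫ x, g x * (star (g x) - p x) ∂μ := by
      have : ∫ x, g x * (star (g x) - p x) ∂μ = ∫ x, g x * star (g x) ∂μ - ∫ x, g x * p x ∂μ := by
        rw [← integral_sub (hgc _ hgs) (hgc _ hpi)]; simp only [mul_sub]
      rw [this, hspan p hp, sub_zero, ← integral_complex_ofReal]
      congr 1; ext x
      rw [← starRingEnd_apply, Complex.mul_conj, Complex.normSq_eq_norm_sq]
    have e2 : ‖((∫ x, ‖g x‖ ^ 2 ∂μ : ℝ) : ℂ)‖ ≤ C * (ε / (C + 1)) := by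
      rw [e1]
      calc _ ≤ ∫ x, ‖g x * (star (g x) - p x)‖ ∂μ := norm_integral_le_integral_norm _
        _ ≤ ∫ x, C * ‖star (g x) - p x‖ ∂μ := by
          refine integral_mono (hgc _ (hgs.sub hpi)).norm ((hgs.sub hpi).norm.const_mul _) fun x => ?_
          simp only [norm_mul]
          gcongr
          exact hC x
        _ = C * ∫ x, ‖star (g x) - p x‖ ∂μ := integral_const_mul _ _
        _ ≤ _ := by gcongr
    rw [Complex.norm_real, Real.norm_of_nonneg hpos] at e2
    have : C * (ε / (C + 1)) ≤ ε := by
      rw [← mul_div_assoc, div_le_iff₀ (by positivity)]; nlinarith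
    linarith
  have hi : Integrable (fun x => ‖g x‖ ^ 2) μ := by
    refine Integrable.of_bound (hgm.norm.pow 2) (C ^ 2) (Eventually.of_forall fun x => ?_)
    rw [norm_pow, norm_norm]
    exact pow_le_pow_left₀ (norm_nonneg _) (hC x) 2
  have := (integral_eq_zero_iff_of_nonneg (fun x => by positivity) hi).1 hz
  filter_upwards [this] with x hx
  simpa using hx

def ev {K : Type*} [AddCommGroup K] [TopologicalSpace K] (a : K) (ξ : AddDual K) : ℂ :=
  ((ξ (Multiplicative.ofAdd a) : Circle) : ℂ)

section ev
variable {K : Type*} [AddCommGroup K] [TopologicalSpace K]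

@[simp] theorem ev_zero (ξ : AddDual K) : ev 0 ξ = 1 := by simp [ev]

theorem ev_add (a b : K) (ξ : AddDual K) : ev (a + b) ξ = ev a ξ * ev b ξ := by
  simp [ev, ofAdd_add]

theorem ev_neg (a : K) (ξ : AddDual K) : ev (-a) ξ = starRingEnd ℂ (ev a ξ) := by
  rw [ev, ev, ofAdd_neg, map_inv, Circle.coe_inv_eq_conj]

@[simp] theorem norm_ev (a : K) (ξ : AddDual K) : ‖ev a ξ‖ = 1 := Circle.norm_coe _

@[simp] theorem ev_one (a : K) : ev a (1 : AddDual K) = 1 := by simp [ev]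

theorem ev_mul (a : K) (ξ ζ : AddDual K) : ev a (ξ * ζ) = ev a ξ * ev a ζ := rfl

theorem ev_inv (a : K) (ξ : AddDual K) : ev a (ξ⁻¹) = ev (-a) ξ := by
  rw [ev, ev, ofAdd_neg, map_inv]; rfl

theorem ev_ext {ξ ζ : AddDual K} (h : ∀ a, ev a ξ = ev a ζ) : ξ = ζ := by
  apply DFunLike.ext
  intro x
  exact Subtype.ext (h (Multiplicative.toAdd x))

theorem continuous_ev [DiscreteTopology K] (a : K) : Continuous (ev a : AddDual K → ℂ) := by
  have : Continuous fun ξ : AddDual K => ξ (Multiplicative.ofAdd a) := by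
    have h : Continuous fun ξ : AddDual K => ContinuousMonoidHom.toContinuousMap ξ :=
      (ContinuousMonoidHom.isInducing_toContinuousMap _ _).continuous
    exact (ContinuousEvalConst.continuous_eval_const (F := C(Multiplicative K, Circle)) (Multiplicative.ofAdd a)).comp h
  exact continuous_subtype_val.comp this

variable [DiscreteTopology K]

theorem ev_dualComp {L : Type*} [AddCommGroup L] [TopologicalSpace L] (f : K →+ L) (a : K) (η : AddDual L) :
    ev a (dualComp f η) = ev (f a) η := rfl

theorem continuous_dualComp {L : Type*} [AddCommGroup L] [TopologicalSpace L] (f : K →+ L) :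
    Continuous (dualComp f : AddDual L → AddDual K) :=
  ContinuousMonoidHom.continuous_comp_left _

instance [Countable K] : SecondCountableTopology (AddDual K) := by
  have : Countable (Multiplicative K) := ‹Countable K›
  have : SecondCountableTopology (Multiplicative K) := inferInstance
  have : LocallyCompactSpace (Multiplicative K) := inferInstance
  exact (ContinuousMonoidHom.isEmbedding_toContinuousMap (Multiplicative K) Circle).secondCountableTopology

instance : CompactSpace (AddDual K) := inferInstance
instance : T2Space (AddDual K) := inferInstance

instance [Countable K] : PolishSpace (AddDual K) := by
  let _ := TopologicalSpace.metrizableSpaceMetric (AddDual K)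
  infer_instance

/-- bundled -/
def evC (a : K) : C(AddDual K, ℂ) := ⟨ev a, continuous_ev a⟩

theorem evC_mul (i j : K) : ∃ k, evC k = evC i * evC j :=
  ⟨i + j, by ext x; exact ev_add _ _ _⟩
theorem evC_one : ∃ k : K, evC k = 1 := ⟨0, by ext x; exact ev_zero _⟩
theorem evC_star (i : K) : ∃ k, evC k = star (evC i) := ⟨-i, by ext x; exact ev_neg _ _⟩
theorem evC_sep (x y : AddDual K) (h : x ≠ y) : ∃ i : K, evC i x ≠ evC i y := by
  by_contra! hc
  exact h (ev_ext hc)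

theorem measure_ext_ev [Countable K] [MeasurableSpace (AddDual K)] [BorelSpace (AddDual K)]
    (μ ν : Measure (AddDual K)) [IsFiniteMeasure μ] [IsFiniteMeasure ν]
    (h : ∀ a : K, ∫ x, ev a x ∂μ = ∫ x, ev a x ∂ν) : μ = ν :=
  fourier_unique evC evC_mul evC_one evC_star evC_sep μ ν h

theorem measure_ext_ev2 [Countable K] [MeasurableSpace (AddDual K)] [BorelSpace (AddDual K)]
    {L : Type*} [AddCommGroup L] [TopologicalSpace L] [DiscreteTopology L] [Countable L]
    [MeasurableSpace (AddDual L)] [BorelSpace (AddDual L)]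
    (μ ν : Measure (AddDual K × AddDual L)) [IsFiniteMeasure μ] [IsFiniteMeasure ν]
    (h : ∀ (a : K) (b : L), ∫ x, ev a x.1 * ev b x.2 ∂μ = ∫ x, ev a x.1 * ev b x.2 ∂ν) : μ = ν := by
  refine fourier_unique (fun i : K × L => (⟨fun x => ev i.1 x.1 * ev i.2 x.2,
    ((continuous_ev _).comp continuous_fst).mul ((continuous_ev _).comp continuous_snd)⟩ :
    C(AddDual K × AddDual L, ℂ))) ?_ ?_ ?_ ?_ μ ν (fun i => h i.1 i.2)
  · rintro i j
    exact ⟨i + j, by ext x; simp [ev_add]; ring⟩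
  · exact ⟨0, by ext x; simp⟩
  · intro i
    exact ⟨-i, by ext x; simp [ev_neg]⟩
  · rintro ⟨x1, x2⟩ ⟨y1, y2⟩ hne
    by_contra! hc
    apply hne
    ext1
    · exact ev_ext fun a => by simpa using hc (a, 0)
    · exact ev_ext fun a => by simpa using hc (0, a)

theorem integrable_ev [Countable K] [MeasurableSpace (AddDual K)] [BorelSpace (AddDual K)]
    (μ : Measure (AddDual K)) [IsFiniteMeasure μ] (a : K) : Integrable (ev a) μ :=
  integrable_cont _ _ (continuous_ev a)

theorem measurable_ev [MeasurableSpace (AddDual K)] [BorelSpace (AddDual K)] (a : K) :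
    Measurable (ev a : AddDual K → ℂ) := (continuous_ev a).measurable

theorem exists_ev_ne_one (a : K) (ha : a ≠ 0) : ∃ ζ : AddDual K, ev a ζ ≠ 1 := by
  obtain ⟨c, hc⟩ := CharacterModule.exists_character_apply_ne_zero_of_ne_zero ha
  let i : AddCircle (1 : ℚ) →+ AddCircle (1 : ℝ) :=
    QuotientAddGroup.map _ _ (Rat.castHom ℝ).toAddMonoidHom (by
      rw [AddSubgroup.zmultiples_le]
      simp)
  have hi : ∀ x, i x = 0 → x = 0 := by
    intro x
    induction x using QuotientAddGroup.induction_on with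
    | H q =>
      intro h
      have h' : ((q : ℝ) : AddCircle (1 : ℝ)) = 0 := h
      rw [AddCircle.coe_eq_zero_iff] at h'
      obtain ⟨n, hn⟩ := h'
      refine (AddCircle.coe_eq_zero_iff (1 : ℚ)).2 ⟨n, ?_⟩
      simp only [zsmul_eq_mul, mul_one] at hn ⊢
      exact_mod_cast hn
  let f : Multiplicative K →* Circle :=
    { toFun := fun x => AddCircle.toCircle (i (c (Multiplicative.toAdd x)))
      map_one' := by simp
      map_mul' := fun x y => by simp [AddCircle.toCircle_add] }
  refine ⟨⟨f, continuous_of_discreteTopology⟩, fun h => hc (hi _ ?_)⟩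
  apply AddCircle.injective_toCircle (one_ne_zero (α := ℝ))
  rw [AddCircle.toCircle_zero]
  exact Subtype.ext h

/-- translation invariance kills nontrivial characters -/
theorem haar_ev [Countable K] [MeasurableSpace (AddDual K)] [BorelSpace (AddDual K)]
    (m : Measure (AddDual K)) [m.IsHaarMeasure] (a : K) (ha : a ≠ 0) :
    ∫ x, ev a x ∂m = 0 := by
  have : ∃ ζ : AddDual K, ev a ζ ≠ 1 := exists_ev_ne_one a ha
  obtain ⟨ζ, hζ⟩ := this
  have h := integral_mul_left_eq_self (μ := m) (fun x => ev a x) ζ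
  simp only [ev_mul] at h
  rw [integral_const_mul] at h
  have h2 : (ev a ζ - 1) * ∫ x, ev a x ∂m = 0 := by rw [sub_mul, h]; ring
  exact (mul_eq_zero.1 h2).resolve_left (sub_ne_zero.2 hζ)
end ev

section field
variable {K : Type*} [Field K] [TopologicalSpace K] [DiscreteTopology K]

theorem ev_dualSmul (a b : K) (ξ : AddDual K) : ev b (dualSmul a ξ) = ev (a * b) ξ := rfl

theorem continuous_dualSmul (a : K) : Continuous (dualSmul a : AddDual K → AddDual K) :=
  continuous_dualComp _

theorem dualSmul_one (ξ : AddDual K) : dualSmul 1 ξ = ξ := ev_ext fun a => by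
  rw [ev_dualSmul, one_mul]

theorem dualSmul_dualSmul (a b : K) (ξ : AddDual K) : dualSmul a (dualSmul b ξ) = dualSmul (a * b) ξ :=
  ev_ext fun c => by rw [ev_dualSmul, ev_dualSmul, ev_dualSmul]; ring_nf

end field


section atoms
variable {K : Type*} [AddCommGroup K] [TopologicalSpace K] [DiscreteTopology K] [Countable K]
  [MeasurableSpace (AddDual K)] [BorelSpace (AddDual K)]

theorem normsq_sum (ν : Measure (AddDual K)) [IsProbabilityMeasure ν] (τ : ℂ)
    (h : ∀ k : K, k ≠ 0 → ∫ x, ev k x ∂ν = τ) (s : ℕ → K) (hs : Function.Injective s) (N : ℕ) :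
    Integrable (fun x => ‖∑ i ∈ Finset.range N, ev (s i) x‖ ^ 2) ν ∧
    ∫ x, ‖∑ i ∈ Finset.range N, ev (s i) x‖ ^ 2 ∂ν = N + ((N : ℝ) ^ 2 - N) * τ.re := by
  let f : AddDual K → ℂ := fun x => ∑ i ∈ Finset.range N, ev (s i) x
  have hfc : Continuous f := continuous_finsetSum _ fun i _ => continuous_ev _
  have h1 : ((∫ x, ‖f x‖ ^ 2 ∂ν : ℝ) : ℂ) = N + ((N : ℂ) ^ 2 - N) * τ := by
    rw [← integral_complex_ofReal]
    have : ∀ x, ((‖f x‖ ^ 2 : ℝ) : ℂ) =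
        ∑ i ∈ Finset.range N, ∑ j ∈ Finset.range N, ev (s i - s j) x := by
      intro x
      rw [← Complex.normSq_eq_norm_sq, ← Complex.mul_conj, map_sum, Finset.sum_mul_sum]
      refine Finset.sum_congr rfl fun i _ => Finset.sum_congr rfl fun j _ => ?_
      rw [sub_eq_add_neg, ev_add, ev_neg]
    simp_rw [this]
    rw [integral_finsetSum _ fun i _ => integrable_finsetSum _ fun j _ => integrable_ev ν _]
    have h2 : ∀ i ∈ Finset.range N,
        ∫ x, ∑ j ∈ Finset.range N, ev (s i - s j) x ∂ν = 1 + (N - 1) * τ := by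
      intro i hi
      rw [integral_finsetSum _ fun j _ => integrable_ev ν _]
      rw [← Finset.add_sum_erase _ _ hi]
      congr 1
      · simp
      · rw [Finset.sum_congr rfl (g := fun _ => τ), Finset.sum_const, Finset.card_erase_of_mem hi,
          Finset.card_range, nsmul_eq_mul, Nat.cast_sub, Nat.cast_one]
        · have := Finset.mem_range.1 hi; omega
        · intro j hj
          refine h _ (sub_ne_zero.2 fun hh => ?_)
          exact (Finset.mem_erase.1 hj).1 (hs hh).symm
    rw [Finset.sum_congr rfl h2, Finset.sum_const, Finset.card_range, nsmul_eq_mul]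
    ring
  have h1r : ∫ x, ‖f x‖ ^ 2 ∂ν = N + ((N : ℝ) ^ 2 - N) * τ.re := by
    have := congrArg Complex.re h1
    have e : ((N : ℂ) ^ 2 - N) = (((N : ℝ) ^ 2 - N : ℝ) : ℂ) := by push_cast; ring
    rw [e, Complex.add_re, Complex.re_ofReal_mul] at this
    simpa using this
  have hi : Integrable (fun x => ‖f x‖ ^ 2) ν := by
    have : Integrable (fun x => ((‖f x‖ ^ 2 : ℝ) : ℂ)) ν := integrable_cont ν _ (by fun_prop)
    exact_mod_cast this.re
  exact ⟨hi, h1r⟩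

theorem atom_le [Infinite K] (ν : Measure (AddDual K)) [IsProbabilityMeasure ν] (τ : ℂ)
    (h : ∀ k : K, k ≠ 0 → ∫ x, ev k x ∂ν = τ) : ν.real {1} ≤ τ.re := by
  let s := Infinite.natEmbedding K
  have key : ∀ N : ℕ, ν.real {1} * (N : ℝ) ^ 2 ≤ N + ((N : ℝ) ^ 2 - N) * τ.re := by
    intro N
    let f : AddDual K → ℂ := fun x => ∑ i ∈ Finset.range N, ev (s i) x
    obtain ⟨hi, h1r⟩ := normsq_sum ν τ h s s.injective N
    rw [← h1r]
    have hf1 : ‖f 1‖ ^ 2 = (N : ℝ) ^ 2 := by simp [f]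
    calc ν.real {1} * (N : ℝ) ^ 2 = ∫ x in {1}, ‖f x‖ ^ 2 ∂ν := by
          rw [integral_singleton, hf1, smul_eq_mul]
      _ ≤ ∫ x, ‖f x‖ ^ 2 ∂ν := setIntegral_le_integral hi (Eventually.of_forall fun x => by positivity)
  have lim : Tendsto (fun N : ℕ => (N : ℝ)⁻¹ + (1 - (N : ℝ)⁻¹) * τ.re) atTop (nhds (0 + (1 - 0) * τ.re)) := by
    have := tendsto_inv_atTop_nhds_zero_nat (𝕜 := ℝ)
    exact this.add ((tendsto_const_nhds.sub this).mul_const _)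
  rw [sub_zero, one_mul, zero_add] at lim
  refine ge_of_tendsto lim ?_
  filter_upwards [eventually_gt_atTop 0] with N hN
  have hN' : (0 : ℝ) < N := by exact_mod_cast hN
  have := key N
  rw [← sub_nonneg] at this ⊢
  have e : (N : ℝ)⁻¹ + (1 - (N : ℝ)⁻¹) * τ.re - ν.real {1} =
    (N + ((N : ℝ) ^ 2 - N) * τ.re - ν.real {1} * (N : ℝ) ^ 2) / (N : ℝ) ^ 2 := by
    field_simp
  rw [e]
  positivity

theorem haar_one [Infinite K] (m : Measure (AddDual K)) [m.IsHaarMeasure] [IsProbabilityMeasure m] :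
    m {1} = 0 := by
  have := atom_le m 0 fun k hk => haar_ev m k hk
  have h2 : m.real {1} = 0 := le_antisymm (by simpa using this) measureReal_nonneg
  rwa [measureReal_eq_zero_iff] at h2

theorem atom_ge [Infinite K] (m : Measure (AddDual K)) [m.IsHaarMeasure] [IsProbabilityMeasure m]
    (σ : Measure (AddDual K)) [IsFiniteMeasure σ] (t : ℝ) (ht : 0 ≤ t)
    (h : ∀ k : K, k ≠ 0 → ∫ x, ev k x ∂σ = t) : t ≤ σ.real {1} := by
  have hle : t ≤ σ.real Set.univ := by
    obtain ⟨k, hk⟩ := exists_ne (0 : K)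
    have h1 := h k hk
    have h2 : ‖∫ x, ev k x ∂σ‖ ≤ 1 * σ.real Set.univ :=
      norm_integral_le_of_norm_le_const (Eventually.of_forall fun x => by simp)
    rw [h1, Complex.norm_real, Real.norm_of_nonneg ht, one_mul] at h2
    exact h2
  have e : σ = ENNReal.ofReal t • Measure.dirac 1 + ENNReal.ofReal (σ.real Set.univ - t) • m := by
    have : IsFiniteMeasure (ENNReal.ofReal t • Measure.dirac (1 : AddDual K)) :=
      Measure.smul_finite _ ENNReal.ofReal_ne_top
    have : IsFiniteMeasure (ENNReal.ofReal (σ.real Set.univ - t) • m) :=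
      Measure.smul_finite _ ENNReal.ofReal_ne_top
    refine measure_ext_ev _ _ fun a => ?_
    rw [integral_add_measure (integrable_ev _ _) (integrable_ev _ _), integral_smul_measure,
      integral_smul_measure, integral_dirac, ENNReal.toReal_ofReal ht,
      ENNReal.toReal_ofReal (sub_nonneg.2 hle), ev_one]
    by_cases ha : a = 0
    · subst ha
      simp
    · rw [h a ha, haar_ev m a ha]; simp
  have hm : m.real {1} = 0 := by rw [measureReal_eq_zero_iff]; exact haar_one m
  have hm := haar_one m
  have e2 : σ {1} = ENNReal.ofReal t := by
    rw [e, Measure.add_apply, Measure.smul_apply, Measure.smul_apply, hm]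
    simp
  rw [Measure.real, e2, ENNReal.toReal_ofReal ht]
end atoms

section inv
variable {K : Type*} [Field K] [TopologicalSpace K] [DiscreteTopology K] [Countable K]
  [MeasurableSpace (AddDual K)] [BorelSpace (AddDual K)]

theorem measurable_dualSmul (a : K) : Measurable (dualSmul a : AddDual K → AddDual K) :=
  (continuous_dualSmul a).measurable

theorem haar_map_dualSmul (m : Measure (AddDual K)) [m.IsHaarMeasure] [IsProbabilityMeasure m]
    (b : K) (hb : b ≠ 0) : m.map (dualSmul b) = m := by
  have := Measure.isProbabilityMeasure_map (μ := m) (measurable_dualSmul b).aemeasurable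
  refine measure_ext_ev _ _ fun a => ?_
  rw [integral_map (measurable_dualSmul b).aemeasurable (continuous_ev a).aestronglyMeasurable]
  simp only [ev_dualSmul]
  by_cases ha : a = 0
  · simp [ha]
  · rw [haar_ev m _ ha, haar_ev m _ (mul_ne_zero hb ha)]

theorem mp_dualSmul (m : Measure (AddDual K)) [m.IsHaarMeasure] [IsProbabilityMeasure m]
    (b : K) (hb : b ≠ 0) : MeasurePreserving (dualSmul b) m m :=
  ⟨measurable_dualSmul b, haar_map_dualSmul m b hb⟩

def dualSmulEquiv (b : K) (hb : b ≠ 0) : AddDual K ≃ᵐ AddDual K where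
  toFun := dualSmul b
  invFun := dualSmul b⁻¹
  left_inv := fun x => by rw [dualSmul_dualSmul, inv_mul_cancel₀ hb, dualSmul_one]
  right_inv := fun x => by rw [dualSmul_dualSmul, mul_inv_cancel₀ hb, dualSmul_one]
  measurable_toFun := measurable_dualSmul b
  measurable_invFun := measurable_dualSmul _

theorem integral_dualSmul (m : Measure (AddDual K)) [m.IsHaarMeasure] [IsProbabilityMeasure m]
    (b : K) (hb : b ≠ 0) {E : Type*} [NormedAddCommGroup E] [NormedSpace ℝ E] (g : AddDual K → E) :
    ∫ x, g (dualSmul b x) ∂m = ∫ x, g x ∂m :=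
  (mp_dualSmul m b hb).integral_comp (dualSmulEquiv b hb).measurableEmbedding g

/-- trigonometric polynomials -/
def tp (c : K →₀ ℂ) (x : AddDual K) : ℂ := ∑ i ∈ c.support, c i * ev i x

theorem continuous_tp (c : K →₀ ℂ) : Continuous (tp c) :=
  continuous_finsetSum _ fun i _ => continuous_const.mul (continuous_ev i)

theorem tp_bound (c : K →₀ ℂ) : ∃ C : ℝ, 0 ≤ C ∧ ∀ x, ‖tp c x‖ ≤ C := by
  refine ⟨∑ i ∈ c.support, ‖c i‖, by positivity, fun x => ?_⟩
  refine (norm_sum_le _ _).trans (Finset.sum_le_sum fun i _ => ?_)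
  simp

theorem tp_approx (m : Measure (AddDual K)) [m.IsHaarMeasure] [IsProbabilityMeasure m]
    (g : AddDual K → ℂ) (hg : Integrable g m) (h0 : ∫ x, g x ∂m = 0) (ε : ℝ) (hε : 0 < ε) :
    ∃ c : K →₀ ℂ, c 0 = 0 ∧ ∫ x, ‖g x - tp c x‖ ∂m ≤ ε := by
  classical
  obtain ⟨p, hp, hpe⟩ := l1_approx evC evC_mul evC_one evC_star evC_sep m g hg (ε / 2) (half_pos hε)
  rw [Finsupp.mem_span_range_iff_exists_finsupp] at hp
  obtain ⟨c, rfl⟩ := hp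
  have hpx : ∀ x, (c.sum fun i a => a • evC i : C(AddDual K, ℂ)) x = c 0 + tp (c.erase 0) x := by
    intro x
    rw [Finsupp.sum, ContinuousMap.coe_sum, Finset.sum_apply, tp]
    by_cases h : (0 : K) ∈ c.support
    · rw [← Finset.add_sum_erase _ _ h, Finsupp.support_erase]
      congr 1
      · simp [evC]
      · refine Finset.sum_congr rfl fun i hi => ?_
        rw [Finsupp.erase_ne (Finset.mem_erase.1 hi).1]
        rfl
    · have h' : c 0 = 0 := by simpa using h
      rw [h', zero_add, Finsupp.support_erase, Finset.erase_eq_of_notMem h]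
      refine Finset.sum_congr rfl fun i hi => ?_
      rw [Finsupp.erase_ne (a := 0) (a' := i) (fun hh => h (by rw [← hh]; exact hi))]
      rfl
  simp only [hpx] at hpe
  refine ⟨c.erase 0, by simp, ?_⟩
  set d := c.erase 0
  have hd0 : d 0 = 0 := by simp [d]
  have hti : Integrable (tp d) m := integrable_cont _ _ (continuous_tp d)
  have hi : Integrable (fun x => g x - (c 0 + tp d x)) m := hg.sub ((integrable_const _).add hti)
  have htz : ∫ x, tp d x ∂m = 0 := by
    simp only [tp]
    rw [integral_finsetSum _ fun i _ => (integrable_ev m i).const_mul _]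
    refine Finset.sum_eq_zero fun i hi => ?_
    rw [integral_const_mul, haar_ev m i, mul_zero]
    rintro rfl
    exact (Finsupp.mem_support_iff.1 hi) hd0
  have hc : ‖c 0‖ ≤ ε / 2 := by
    have e : ∫ x, (g x - (c 0 + tp d x)) ∂m = - c 0 := by
      rw [integral_sub (g := fun x => c 0 + tp d x) hg ((integrable_const _).add hti),
        integral_add (f := fun _ => c 0) (integrable_const _) hti, h0, htz]
      simp
    have := norm_integral_le_integral_norm (μ := m) (fun x => g x - (c 0 + tp d x))
    rw [e, norm_neg] at this
    exact this.trans hpe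
  calc ∫ x, ‖g x - tp d x‖ ∂m ≤ ∫ x, (‖g x - (c 0 + tp d x)‖ + ε / 2) ∂m := by
        refine integral_mono (hg.sub hti).norm (hi.norm.add (integrable_const _)) fun x => ?_
        have : g x - tp d x = (g x - (c 0 + tp d x)) + c 0 := by ring
        simp only
        rw [this]
        exact (norm_add_le _ _).trans (by gcongr)
    _ ≤ ε := by
        rw [integral_add hi.norm (integrable_const _)]; simp; linarith

theorem tp_triple (m : Measure (AddDual K)) [m.IsHaarMeasure] [IsProbabilityMeasure m]
    (c1 c2 c3 : K →₀ ℂ) (x y z : K)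
    (h : ∫ η, tp c1 (dualSmul x η) * tp c2 (dualSmul y η) * starRingEnd ℂ (tp c3 (dualSmul z η)) ∂m ≠ 0) :
    ∃ s1 ∈ c1.support, ∃ s2 ∈ c2.support, ∃ s3 ∈ c3.support, s1 * x + s2 * y = s3 * z := by
  by_contra! hc
  apply h
  have : ∀ η, tp c1 (dualSmul x η) * tp c2 (dualSmul y η) * starRingEnd ℂ (tp c3 (dualSmul z η)) =
      ∑ s1 ∈ c1.support, ∑ s2 ∈ c2.support, ∑ s3 ∈ c3.support,
        (c1 s1 * c2 s2 * starRingEnd ℂ (c3 s3)) * ev (s1 * x + s2 * y - s3 * z) η := by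
    intro η
    simp only [tp, map_sum, Finset.sum_mul, map_mul]
    refine Finset.sum_congr rfl fun i _ => ?_
    rw [mul_assoc, Finset.sum_mul, Finset.mul_sum]
    refine Finset.sum_congr rfl fun j _ => ?_
    rw [Finset.mul_sum, Finset.mul_sum]
    refine Finset.sum_congr rfl fun k _ => ?_
    rw [ev_dualSmul, ev_dualSmul, ev_dualSmul, sub_eq_add_neg, ev_add, ev_add, ev_neg, mul_comm x, mul_comm y, mul_comm z]
    ring
  simp_rw [this]
  rw [integral_finsetSum _ fun i _ => integrable_finsetSum _ fun j _ => integrable_finsetSum _ fun k _ =>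
    (integrable_ev m _).const_mul _]
  refine Finset.sum_eq_zero fun i hi => ?_
  rw [integral_finsetSum _ fun j _ => integrable_finsetSum _ fun k _ =>
    (integrable_ev m _).const_mul _]
  refine Finset.sum_eq_zero fun j hj => ?_
  rw [integral_finsetSum _ fun k _ => (integrable_ev m _).const_mul _]
  refine Finset.sum_eq_zero fun k hk => ?_
  rw [integral_const_mul, haar_ev m _ (sub_ne_zero.2 (hc i hi j hj k hk)), mul_zero]
end inv


section ker
open ProbabilityTheory
variable {K : Type*} [Field K] [TopologicalSpace K] [DiscreteTopology K] [Countable K]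
  [MeasurableSpace (AddDual K)] [BorelSpace (AddDual K)]
  {Y : Type*} [MeasurableSpace Y] (m : Measure Y) [IsProbabilityMeasure m]
  (q : Kernel Y (AddDual K)) [IsMarkovKernel q]

def kU (k : K) (y : Y) : ℂ := ∫ ξ, ev k ξ ∂(q y)

theorem kU_sm (k : K) : StronglyMeasurable (kU q k) :=
  StronglyMeasurable.integral_kernel (measurable_ev k).stronglyMeasurable

theorem kU_norm (k : K) (y : Y) : ‖kU q k y‖ ≤ 1 := by
  have := norm_integral_le_of_norm_le_const (μ := q y) (f := ev k) (C := 1)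
    (Eventually.of_forall fun x => by simp)
  simpa [kU] using this

theorem kU_neg (k : K) (y : Y) : kU q (-k) y = starRingEnd ℂ (kU q k y) := by
  rw [kU, kU, ← integral_conj]
  simp only [ev_neg]

theorem kU_integrable (k : K) : Integrable (kU q k) m :=
  Integrable.of_bound (kU_sm q k).aestronglyMeasurable 1 (Eventually.of_forall (kU_norm q k))

theorem ker_coeff2 (k : K) :
    ∫ x, ev k x ∂((m ⊗ₘ (q ×ₖ q)).map (fun p => p.2.1 * (p.2.2)⁻¹)) =
      ((∫ y, ‖kU q k y‖ ^ 2 ∂m : ℝ) : ℂ) := by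
  have hmeas : Measurable (fun p : Y × (AddDual K × AddDual K) => p.2.1 * (p.2.2)⁻¹) := by fun_prop
  rw [integral_map hmeas.aemeasurable (continuous_ev k).aestronglyMeasurable,
    Measure.integral_compProd, ← integral_complex_ofReal]
  · refine integral_congr_ae (Eventually.of_forall fun y => ?_)
    simp only [ev_mul, ev_inv, Kernel.prod_apply]
    rw [integral_prod_mul (fun x => ev k x) (fun x => ev (-k) x)]
    change kU q k y * kU q (-k) y = _
    rw [kU_neg, Complex.mul_conj, Complex.normSq_eq_norm_sq]
  · exact Integrable.of_bound ((measurable_ev k).comp hmeas).aestronglyMeasurable 1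
      (Eventually.of_forall fun x => by simp)

def D3 : Set (Y × (AddDual K × (AddDual K × AddDual K))) :=
  {p | p.2.1 = p.2.2.1 ∧ p.2.1 = p.2.2.2}

theorem measurableSet_D3 : MeasurableSet (D3 : Set (Y × (AddDual K × (AddDual K × AddDual K)))) := by
  apply MeasurableSet.inter
  · exact measurableSet_eq_fun (by fun_prop) (by fun_prop)
  · exact measurableSet_eq_fun (by fun_prop) (by fun_prop)

theorem D3_pos (h : ((m ⊗ₘ (q ×ₖ q)).map (fun p => p.2.1 * (p.2.2)⁻¹)) {1} ≠ 0) :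
    (m ⊗ₘ (q ×ₖ (q ×ₖ q))) D3 ≠ 0 := by
  intro h0
  apply h
  have hmeas : Measurable (fun p : Y × (AddDual K × AddDual K) => p.2.1 * (p.2.2)⁻¹) := by fun_prop
  rw [Measure.map_apply hmeas (measurableSet_singleton 1), Measure.compProd_apply (hmeas (measurableSet_singleton 1))]
  rw [Measure.compProd_apply measurableSet_D3, lintegral_eq_zero_iff
    (Kernel.measurable_kernel_prodMk_left measurableSet_D3)] at h0
  rw [lintegral_eq_zero_iff (Kernel.measurable_kernel_prodMk_left (hmeas (measurableSet_singleton 1)))]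
  filter_upwards [h0] with y hy
  simp only [Pi.zero_apply] at hy ⊢
  have hat : ∀ ξ, q y {ξ} = 0 := by
    intro ξ
    have hle : ({ξ} : Set (AddDual K)) ×ˢ (({ξ} : Set (AddDual K)) ×ˢ ({ξ} : Set (AddDual K))) ⊆
        Prod.mk y ⁻¹' D3 := by
      rintro ⟨a, b, c⟩ ⟨ha, hb, hc⟩
      simp only [Set.mem_singleton_iff] at ha hb hc
      subst ha
      exact ⟨hb.symm, hc.symm⟩
    have h1 := measure_mono_null hle hy
    rw [Kernel.prod_apply, Kernel.prod_apply, Measure.prod_prod, Measure.prod_prod] at h1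
    simpa using h1
  rw [Kernel.prod_apply, Measure.prod_apply (measurable_prodMk_left (hmeas (measurableSet_singleton 1)))]
  rw [← lintegral_zero (μ := q y)]
  congr 1
  ext ξ
  convert hat ξ using 2
  ext ζ
  simp [mul_inv_eq_one, eq_comm]

theorem ker_triple [Infinite K] (a a' a'' : K) (h : a + a' = a'') (τ : ℂ)
    (hτ : ∀ k : K, k ≠ 0 → ∫ y, kU q (a * k) y * kU q (a' * k) y * starRingEnd ℂ (kU q (a'' * k) y) ∂m = τ) :
    (m ⊗ₘ (q ×ₖ (q ×ₖ q))).real D3 ≤ τ.re := by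
  let T : Y × (AddDual K × (AddDual K × AddDual K)) → AddDual K := fun p =>
    dualSmul a p.2.1 * (dualSmul a' p.2.2.1 * (dualSmul a'' p.2.2.2)⁻¹)
  have hm : ∀ a : K, Measurable (dualSmul a : AddDual K → AddDual K) := measurable_dualSmul
  have hT : Measurable T := by
    have h1 := hm a
    have h2 := hm a'
    have h3 := hm a''
    fun_prop
  have := Measure.isProbabilityMeasure_map (μ := m ⊗ₘ (q ×ₖ (q ×ₖ q))) hT.aemeasurable
  have key := atom_le ((m ⊗ₘ (q ×ₖ (q ×ₖ q))).map T) τ (by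
    intro k hk
    rw [← hτ k hk, integral_map hT.aemeasurable (continuous_ev k).aestronglyMeasurable,
      Measure.integral_compProd]
    · refine integral_congr_ae (Eventually.of_forall fun y => ?_)
      simp only [T, ev_mul, ev_inv, Kernel.prod_apply, ev_dualSmul]
      rw [integral_prod_mul (fun x => ev (a * k) x) (fun x : AddDual K × AddDual K => ev (a' * k) x.1 * ev (a'' * (-k)) x.2),
        integral_prod_mul (fun x => ev (a' * k) x) (fun x => ev (a'' * (-k)) x)]
      change kU q (a * k) y * (kU q (a' * k) y * kU q (a'' * (-k)) y) = _
      rw [mul_neg, kU_neg, mul_assoc]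
    · exact Integrable.of_bound ((measurable_ev k).comp hT).aestronglyMeasurable 1
        (Eventually.of_forall fun x => by simp))
  refine le_trans ?_ key
  rw [map_measureReal_apply hT (measurableSet_singleton 1)]
  refine measureReal_mono ?_
  rintro ⟨y, x1, x2, x3⟩ ⟨h1, h2⟩
  simp only at h1 h2
  subst h1 h2
  refine ev_ext fun k => ?_
  simp only [T, ev_mul, ev_inv, ev_dualSmul, ev_one, mul_neg]
  rw [← ev_add, ← ev_add, ← h]
  rw [← ev_zero x1]; congr 1; ring
end ker


section p1
open ProbabilityTheory
variable {K L : Type*} [Field K] [Countable K] [Infinite K] [Field L] [Countable L] [Infinite L]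
    [TopologicalSpace K] [DiscreteTopology K] [TopologicalSpace L] [DiscreteTopology L]
    [MeasurableSpace (AddDual K)] [BorelSpace (AddDual K)]
    [MeasurableSpace (AddDual L)] [BorelSpace (AddDual L)]

/-- Fourier coefficients -/
def fc (θ : Measure (AddDual K × AddDual L)) (a : K) (b : L) : ℂ := ∫ p, ev a p.1 * ev b p.2 ∂θ

theorem continuous_ev2 (a : K) (b : L) : Continuous fun p : AddDual K × AddDual L => ev a p.1 * ev b p.2 :=
  ((continuous_ev _).comp continuous_fst).mul ((continuous_ev _).comp continuous_snd)

theorem measurable_pm (a : K) (b : L) : Measurable (Prod.map (dualSmul a) (dualSmul b) :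
    AddDual K × AddDual L → AddDual K × AddDual L) :=
  (measurable_dualSmul a).prodMap (measurable_dualSmul b)

theorem fc_inv (θ : Measure (AddDual K × AddDual L)) (x : K) (y : L)
    (h : θ.map (Prod.map (dualSmul x) (dualSmul y)) = θ) (a : K) (b : L) :
    fc θ (x * a) (y * b) = fc θ a b := by
  conv_rhs => rw [fc, ← h]
  rw [integral_map (measurable_pm x y).aemeasurable (continuous_ev2 a b).aestronglyMeasurable]
  rfl

theorem fc_zero_left (θ : Measure (AddDual K × AddDual L)) (mL : Measure (AddDual L))
    (h2 : θ.map Prod.snd = mL) (b : L) :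
    fc θ 0 b = ∫ η, ev b η ∂mL := by
  rw [← h2, integral_map measurable_snd.aemeasurable (continuous_ev b).aestronglyMeasurable]
  simp [fc]

theorem fc_zero_right (θ : Measure (AddDual K × AddDual L)) (mK : Measure (AddDual K))
    (h2 : θ.map Prod.fst = mK) (b : K) :
    fc θ b 0 = ∫ η, ev b η ∂mK := by
  rw [← h2, integral_map measurable_fst.aemeasurable (continuous_ev b).aestronglyMeasurable]
  simp [fc]

theorem prob_of_map_fst (θ : Measure (AddDual K × AddDual L)) (mK : Measure (AddDual K))
    [IsProbabilityMeasure mK] (h : θ.map Prod.fst = mK) : IsProbabilityMeasure θ := by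
  constructor
  rw [← Set.preimage_univ (f := Prod.fst), ← Measure.map_apply measurable_fst .univ, h, measure_univ]

theorem exists_fc_ne (mK : Measure (AddDual K)) [mK.IsHaarMeasure] [IsProbabilityMeasure mK]
    (mL : Measure (AddDual L)) [mL.IsHaarMeasure] [IsProbabilityMeasure mL]
    (θ : Measure (AddDual K × AddDual L)) (h1 : θ.map Prod.fst = mK) (h2 : θ.map Prod.snd = mL)
    (hne : θ ≠ mK.prod mL) : ∃ (a : K) (b : L), a ≠ 0 ∧ b ≠ 0 ∧ fc θ a b ≠ 0 := by
  by_contra! hc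
  apply hne
  have := prob_of_map_fst θ mK h1
  refine measure_ext_ev2 _ _ fun a b => ?_
  change fc θ a b = fc (mK.prod mL) a b
  by_cases ha : a = 0
  · subst ha
    rw [fc_zero_left θ mL h2, fc_zero_left (mK.prod mL) mL (by simp)]
  · by_cases hb : b = 0
    · subst hb
      rw [fc_zero_right θ mK h1, fc_zero_right (mK.prod mL) mK (by simp)]
    · rw [hc a b ha hb, fc, integral_prod_mul, haar_ev mK a ha, zero_mul]

theorem part1 (mK : Measure (AddDual K)) [mK.IsHaarMeasure] [IsProbabilityMeasure mK]
    (mL : Measure (AddDual L)) [mL.IsHaarMeasure] [IsProbabilityMeasure mL]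
    (ρ : Kˣ ≃* Lˣ) (θ : Measure (AddDual K × AddDual L))
    (h1 : θ.map Prod.fst = mK) (h2 : θ.map Prod.snd = mL)
    (hinv : ∀ a : Kˣ, θ.map (Prod.map (dualSmul (a : K)) (dualSmul ((ρ a : Lˣ) : L))) = θ)
    (hne : θ ≠ mK.prod mL) :
    ∃ (w : Kˣ →* Lˣ) (κ : K ≃+* L), (Set.range w).Finite ∧ ∀ x : Kˣ, κ (x : K) = (w x : L) * (ρ x : L) := by
  have hθp := prob_of_map_fst θ mK h1
  obtain ⟨q, hq, hqθ⟩ : ∃ q : Kernel (AddDual L) (AddDual K), IsMarkovKernel q ∧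
      mL ⊗ₘ q = θ.map Prod.swap := by
    have := Measure.isProbabilityMeasure_map (μ := θ) measurable_swap.aemeasurable
    refine ⟨(θ.map Prod.swap).condKernel, inferInstance, ?_⟩
    have hd := (θ.map Prod.swap).disintegrate (θ.map Prod.swap).condKernel
    have : (θ.map Prod.swap).fst = mL := by
      rw [Measure.fst_map_swap, Measure.snd, h2]
    rwa [this] at hd
  -- coefficients
  have hcoef : ∀ (k : K) (b : L), ∫ η, kU q k η * ev b η ∂mL = fc θ k b := by
    intro k b
    have hc : Continuous fun p : AddDual L × AddDual K => ev k p.2 * ev b p.1 :=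
      (continuous_ev2 k b).comp continuous_swap
    have e : fc θ k b = ∫ p, ev k p.2 * ev b p.1 ∂(θ.map Prod.swap) := by
      rw [integral_map measurable_swap.aemeasurable hc.aestronglyMeasurable]
      rfl
    rw [e, ← hqθ, Measure.integral_compProd (integrable_cont _ _ hc)]
    simp only [integral_mul_const]
    rfl
  have hρ0 : ∀ k : Kˣ, ((ρ k : Lˣ) : L) ≠ 0 := fun k => (ρ k).ne_zero
  have hcov : ∀ k : Kˣ, kU q (k : K) =ᵐ[mL] fun η => kU q 1 (dualSmul ((ρ k : Lˣ) : L) η) := by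
    intro k
    have hm1 : AEStronglyMeasurable (fun η => kU q 1 (dualSmul ((ρ k : Lˣ) : L) η)) mL :=
      ((kU_sm q 1).comp_measurable (measurable_dualSmul _)).aestronglyMeasurable
    have := ae_zero_of_coeff evC evC_mul evC_one evC_star evC_sep mL
      (fun η => kU q (k : K) η - kU q 1 (dualSmul ((ρ k : Lˣ) : L) η))
      ((kU_sm q _).aestronglyMeasurable.sub hm1) 2
      (fun η => (norm_sub_le _ _).trans (by
        have := kU_norm q (k : K) η
        have := kU_norm q 1 (dualSmul ((ρ k : Lˣ) : L) η)
        linarith)) (by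
        intro b
        change ∫ η, (kU q (k : K) η - kU q 1 (dualSmul ((ρ k : Lˣ) : L) η)) * ev b η ∂mL = 0
        simp only [sub_mul]
        have i1 : Integrable (fun η => kU q (k : K) η * ev b η) mL :=
          (integrable_ev mL b).bdd_mul (kU_sm q _).aestronglyMeasurable (Eventually.of_forall (kU_norm q _))
        have i2 : Integrable (fun η => kU q 1 (dualSmul ((ρ k : Lˣ) : L) η) * ev b η) mL :=
          (integrable_ev mL b).bdd_mul hm1 (Eventually.of_forall fun η => kU_norm q _ _)
        rw [integral_sub i1 i2, hcoef, sub_eq_zero]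
        have e : ∀ η, kU q 1 (dualSmul ((ρ k : Lˣ) : L) η) * ev b η =
          (fun η => kU q 1 η * ev (((ρ k : Lˣ) : L)⁻¹ * b) η) (dualSmul ((ρ k : Lˣ) : L) η) := by
          intro η
          simp only [ev_dualSmul]
          rw [mul_inv_cancel_left₀ (hρ0 k)]
        simp_rw [e]
        rw [integral_dualSmul mL _ (hρ0 k) (fun η => kU q 1 η * ev (((ρ k : Lˣ) : L)⁻¹ * b) η), hcoef,
          ← fc_inv θ _ _ (hinv k) 1, mul_inv_cancel_left₀ (hρ0 k), mul_one])
    filter_upwards [this] with η hη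
    simpa [sub_eq_zero] using hη
  -- second moment
  set c : ℝ := ∫ η, ‖kU q 1 η‖ ^ 2 ∂mL with hc
  have hck : ∀ k : K, k ≠ 0 → ∫ η, ‖kU q k η‖ ^ 2 ∂mL = c := by
    intro k hk
    have := hcov (Units.mk0 k hk)
    rw [Units.val_mk0] at this
    rw [hc, ← integral_dualSmul mL _ (hρ0 (Units.mk0 k hk)) (fun η => ‖kU q 1 η‖ ^ 2)]
    refine integral_congr_ae ?_
    filter_upwards [this] with η hη
    rw [hη]
  have hcn : 0 ≤ c := integral_nonneg fun η => by positivity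
  have hcpos : 0 < c := by
    refine lt_of_le_of_ne hcn fun h0 => ?_
    obtain ⟨a, b, ha, hb, hab⟩ := exists_fc_ne mK mL θ h1 h2 hne
    apply hab
    have h3 := hck a ha
    rw [← h0, integral_eq_zero_iff_of_nonneg (fun η => by positivity)] at h3
    · rw [← hcoef, ← integral_zero (AddDual L) ℂ (μ := mL)]
      refine integral_congr_ae ?_
      filter_upwards [h3] with η hη
      have : kU q a η = 0 := by simpa using hη
      rw [this, zero_mul]
    · refine Integrable.of_bound ((kU_sm q _).norm.pow 2).aestronglyMeasurable 1 (Eventually.of_forall fun η => ?_)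
      rw [norm_pow, norm_norm]
      exact pow_le_one₀ (norm_nonneg _) (kU_norm q a η)
  -- atoms
  have hD3 : (mL ⊗ₘ (q ×ₖ (q ×ₖ q))) D3 ≠ 0 := by
    apply D3_pos
    have hmeas : Measurable (fun p : AddDual L × (AddDual K × AddDual K) => p.2.1 * (p.2.2)⁻¹) := by fun_prop
    have := Measure.isProbabilityMeasure_map (μ := mL ⊗ₘ (q ×ₖ q)) hmeas.aemeasurable
    have h3 := atom_ge mK ((mL ⊗ₘ (q ×ₖ q)).map (fun p => p.2.1 * (p.2.2)⁻¹)) c hcn (by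
      intro k hk
      rw [ker_coeff2, hck k hk])
    intro h0
    rw [Measure.real, h0] at h3
    simp at h3
    linarith
  set δ : ℝ := (mL ⊗ₘ (q ×ₖ (q ×ₖ q))).real D3 with hδ
  have hδpos : 0 < δ := by
    rw [hδ]
    exact ENNReal.toReal_pos hD3 (measure_ne_top _ _)
  -- approximation
  have hu0 : ∫ η, kU q 1 η ∂mL = 0 := by
    have := hcoef 1 0
    simp only [ev_zero, mul_one] at this
    rw [this, fc_zero_right θ mK h1, haar_ev mK 1 one_ne_zero]
  obtain ⟨c1, hc1, he1⟩ := tp_approx mL _ (kU_integrable mL q 1) hu0 (δ / 4) (by positivity)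
  obtain ⟨C1, hC1, hb1⟩ := tp_bound c1
  obtain ⟨c2, hc2, he2⟩ := tp_approx mL _ (kU_integrable mL q 1) hu0 (δ / (4 * (C1 + 1))) (by positivity)
  obtain ⟨C2, hC2, hb2⟩ := tp_bound c2
  obtain ⟨c3, hc3, he3⟩ := tp_approx mL _ (kU_integrable mL q 1) hu0 (δ / (4 * (C1 * C2 + 1))) (by positivity)
  have trans : ∀ (k : Kˣ) (d : L →₀ ℂ), ∫ η, ‖kU q (k : K) η - tp d (dualSmul ((ρ k : Lˣ) : L) η)‖ ∂mL =
      ∫ η, ‖kU q 1 η - tp d η‖ ∂mL := by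
    intro k d
    rw [← integral_dualSmul mL _ (hρ0 k) (fun η => ‖kU q 1 η - tp d η‖)]
    refine integral_congr_ae ?_
    filter_upwards [hcov k] with η hη
    rw [hη]
  have trip : ∀ a a' a'' : Kˣ, (a : K) + a' = a'' →
      ∃ s1 ∈ c1.support, ∃ s2 ∈ c2.support, ∃ s3 ∈ c3.support,
        s1 * ((ρ a : Lˣ) : L) + s2 * ((ρ a' : Lˣ) : L) = s3 * ((ρ a'' : Lˣ) : L) := by
    intro a a' a'' hsum
    apply tp_triple mL
    set τ : ℂ := ∫ y, kU q a y * kU q a' y * starRingEnd ℂ (kU q a'' y) ∂mL with hτ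
    have hre : δ ≤ τ.re := by
      apply ker_triple mL q a a' a'' hsum τ
      intro k hk
      have hk' := hρ0 (Units.mk0 k hk)
      rw [hτ, ← integral_dualSmul mL _ hk' (fun y => kU q a y * kU q a' y * starRingEnd ℂ (kU q a'' y))]
      have tr : ∀ x : Kˣ, kU q (x * k) =ᵐ[mL] fun η => kU q x (dualSmul ((ρ (Units.mk0 k hk) : Lˣ) : L) η) := by
        intro x
        have e1 := hcov (x * Units.mk0 k hk)
        have e2 := (mp_dualSmul mL _ hk').quasiMeasurePreserving.ae_eq_comp (hcov x)
        filter_upwards [e1, e2] with η h1 h2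
        simp only [Function.comp_apply, dualSmul_dualSmul] at h2
        rw [Units.val_mul, Units.val_mk0] at h1
        rw [h1, h2, map_mul, Units.val_mul]
      refine integral_congr_ae ?_
      filter_upwards [tr a, tr a', tr a''] with η e1 e2 e3
      rw [e1, e2, e3]
    intro hz
    set P1 : AddDual L → ℂ := fun η => tp c1 (dualSmul ((ρ a : Lˣ) : L) η) with hP1
    set P2 : AddDual L → ℂ := fun η => tp c2 (dualSmul ((ρ a' : Lˣ) : L) η) with hP2
    set P3 : AddDual L → ℂ := fun η => tp c3 (dualSmul ((ρ a'' : Lˣ) : L) η) with hP3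
    have cP1 : Continuous P1 := (continuous_tp _).comp (continuous_dualSmul _)
    have cP2 : Continuous P2 := (continuous_tp _).comp (continuous_dualSmul _)
    have cP3 : Continuous P3 := (continuous_tp _).comp (continuous_dualSmul _)
    have i1 : Integrable (fun y => ‖kU q a y - P1 y‖) mL := ((kU_integrable mL q (a : K)).sub (integrable_cont mL _ cP1)).norm
    have i2 : Integrable (fun y => ‖kU q a' y - P2 y‖) mL := ((kU_integrable mL q (a' : K)).sub (integrable_cont mL _ cP2)).norm
    have i3 : Integrable (fun y => ‖kU q a'' y - P3 y‖) mL := ((kU_integrable mL q (a'' : K)).sub (integrable_cont mL _ cP3)).norm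
    have iU : Integrable (fun y => kU q a y * kU q a' y * starRingEnd ℂ (kU q a'' y)) mL := by
      refine Integrable.of_bound (((kU_sm q _).mul (kU_sm q _)).mul
        (Complex.continuous_conj.comp_stronglyMeasurable (kU_sm q _))).aestronglyMeasurable 1
        (Eventually.of_forall fun η => ?_)
      rw [norm_mul, norm_mul, RCLike.norm_conj]
      exact mul_le_one₀ (mul_le_one₀ (kU_norm q _ _) (norm_nonneg _) (kU_norm q _ _)) (norm_nonneg _) (kU_norm q _ _)
    have iP : Integrable (fun y => P1 y * P2 y * starRingEnd ℂ (P3 y)) mL :=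
      integrable_cont _ _ (by fun_prop)
    have hbound : ‖τ‖ ≤ δ / 4 + C1 * (δ / (4 * (C1 + 1))) + C1 * C2 * (δ / (4 * (C1 * C2 + 1))) := by
      have : τ = ∫ y, (kU q a y * kU q a' y * starRingEnd ℂ (kU q a'' y) - P1 y * P2 y * starRingEnd ℂ (P3 y)) ∂mL := by
        rw [integral_sub iU iP, hz, sub_zero]
      rw [this]
      calc _ ≤ ∫ y, ‖kU q a y * kU q a' y * starRingEnd ℂ (kU q a'' y) - P1 y * P2 y * starRingEnd ℂ (P3 y)‖ ∂mL :=
            norm_integral_le_integral_norm _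
        _ ≤ ∫ y, (‖kU q a y - P1 y‖ + C1 * ‖kU q a' y - P2 y‖ + C1 * C2 * ‖kU q a'' y - P3 y‖) ∂mL := by
          refine integral_mono (iU.sub iP).norm ((i1.add (i2.const_mul _)).add (i3.const_mul _)) fun y => ?_
          have e : kU q a y * kU q a' y * starRingEnd ℂ (kU q a'' y) - P1 y * P2 y * starRingEnd ℂ (P3 y) =
            (kU q a y - P1 y) * (kU q a' y * starRingEnd ℂ (kU q a'' y)) +
            P1 y * ((kU q a' y - P2 y) * starRingEnd ℂ (kU q a'' y)) +
            P1 y * P2 y * starRingEnd ℂ (kU q a'' y - P3 y) := by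
            rw [map_sub]; ring
          simp only
          rw [e]
          refine norm_add₃_le.trans ?_
          simp only [norm_mul, RCLike.norm_conj]
          have n1 := kU_norm q (a' : K) y
          have n2 := kU_norm q (a'' : K) y
          have m1 : ‖P1 y‖ ≤ C1 := hb1 _
          have m2 : ‖P2 y‖ ≤ C2 := hb2 _
          have t1 : ‖kU q a y - P1 y‖ * (‖kU q a' y‖ * ‖kU q a'' y‖) ≤ ‖kU q a y - P1 y‖ :=
            mul_le_of_le_one_right (norm_nonneg _) (mul_le_one₀ n1 (norm_nonneg _) n2)
          have t2 : ‖P1 y‖ * (‖kU q a' y - P2 y‖ * ‖kU q a'' y‖) ≤ C1 * ‖kU q a' y - P2 y‖ :=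
            mul_le_mul m1 (mul_le_of_le_one_right (norm_nonneg _) n2) (by positivity) hC1
          have t3 : ‖P1 y‖ * ‖P2 y‖ * ‖kU q a'' y - P3 y‖ ≤ C1 * C2 * ‖kU q a'' y - P3 y‖ := by gcongr
          linarith
        _ = (∫ y, ‖kU q a y - P1 y‖ ∂mL) + C1 * (∫ y, ‖kU q a' y - P2 y‖ ∂mL) +
            C1 * C2 * ∫ y, ‖kU q a'' y - P3 y‖ ∂mL := by
          rw [integral_add (f := fun y => ‖kU q a y - P1 y‖ + C1 * ‖kU q a' y - P2 y‖) (i1.add (i2.const_mul _)) (i3.const_mul _),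
            integral_add (f := fun y => ‖kU q a y - P1 y‖) i1 (i2.const_mul _), integral_const_mul, integral_const_mul]
        _ ≤ _ := by
          rw [trans, trans, trans]
          gcongr
    have b2 : C1 * (δ / (4 * (C1 + 1))) ≤ δ / 4 := by
      rw [← mul_div_assoc, div_le_div_iff₀ (by positivity) (by positivity)]; nlinarith
    have b3 : C1 * C2 * (δ / (4 * (C1 * C2 + 1))) ≤ δ / 4 := by
      rw [← mul_div_assoc, div_le_div_iff₀ (by positivity) (by positivity)]; nlinarith
    have := Complex.re_le_norm τ
    linarith
  -- conclude
  have nz : ∀ d : L →₀ ℂ, d 0 = 0 → ∀ s ∈ d.support, s ≠ 0 := by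
    rintro d hd s hs rfl
    exact Finsupp.mem_support_iff.1 hs hd
  refine alg_lemma ρ (Set.image2 (fun x y => x / y) (↑c1.support ∪ ↑c2.support) (↑c3.support : Set L))
    (Set.Finite.image2 _ ((Finset.finite_toSet _).union (Finset.finite_toSet _)) (Finset.finite_toSet _)) ?_ ?_
  · rintro _ ⟨x, hx, y, hy, rfl⟩
    refine div_ne_zero ?_ (nz c3 hc3 y hy)
    rcases hx with hx | hx
    · exact nz c1 hc1 x hx
    · exact nz c2 hc2 x hx
  · intro a b d habd
    obtain ⟨s1, hs1, s2, hs2, s3, hs3, hs⟩ := trip a b d habd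
    refine ⟨s1 / s3, ⟨s1, Or.inl hs1, s3, hs3, rfl⟩, s2 / s3, ⟨s2, Or.inr hs2, s3, hs3, rfl⟩, ?_⟩
    have := nz c3 hc3 s3 hs3
    field_simp
    linear_combination -hs
end p1


theorem infinite_ker {K G : Type*} [Field K] [Infinite K] [Group G] (w : Kˣ →* G) (hw : (Set.range w).Finite) :
    (w.ker : Set Kˣ).Infinite := by
  intro hf
  have : Infinite Kˣ := by
    have hi : Infinite ({0}ᶜ : Set K) := ((Set.finite_singleton (0 : K)).infinite_compl).to_subtype
    refine Infinite.of_injective (fun x : ({0}ᶜ : Set K) => Units.mk0 x.1 x.2) ?_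
    intro x y h
    exact Subtype.ext (congrArg Units.val h)
  have h2 := hw.preimage' (f := w) (by
    rintro _ ⟨x, rfl⟩
    refine (hf.image (fun y => x * y)).subset ?_
    intro y hy
    refine ⟨x⁻¹ * y, ?_, by simp⟩
    have : w y = w x := hy
    simp [MonoidHom.mem_ker, this])
  rw [Set.preimage_range] at h2
  exact Set.infinite_univ h2

theorem atom_of_diff {K : Type*} [AddCommGroup K] [TopologicalSpace K] [DiscreteTopology K] [Countable K]
    [MeasurableSpace (AddDual K)] [BorelSpace (AddDual K)] (ν : Measure (AddDual K)) [IsFiniteMeasure ν]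
    (h : ((ν.prod ν).map (fun p => p.1 * p.2⁻¹)) {1} ≠ 0) : ∃ ζ, ν {ζ} ≠ 0 := by
  by_contra! hat
  apply h
  have hmeas : Measurable (fun p : AddDual K × AddDual K => p.1 * p.2⁻¹) := by fun_prop
  rw [Measure.map_apply hmeas (measurableSet_singleton 1),
    Measure.prod_apply (hmeas (measurableSet_singleton 1)), ← lintegral_zero (μ := ν)]
  congr 1
  ext ξ
  convert hat ξ using 2
  ext ζ
  simp [mul_inv_eq_one, eq_comm]

theorem diff_coeff {K : Type*} [AddCommGroup K] [TopologicalSpace K] [DiscreteTopology K] [Countable K]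
    [MeasurableSpace (AddDual K)] [BorelSpace (AddDual K)] (ν : Measure (AddDual K)) [IsFiniteMeasure ν]
    (k : K) : ∫ x, ev k x ∂((ν.prod ν).map (fun p => p.1 * p.2⁻¹)) = ((‖∫ x, ev k x ∂ν‖ ^ 2 : ℝ) : ℂ) := by
  have hmeas : Measurable (fun p : AddDual K × AddDual K => p.1 * p.2⁻¹) := by fun_prop
  rw [integral_map hmeas.aemeasurable (continuous_ev k).aestronglyMeasurable]
  simp only [ev_mul, ev_inv, ev_neg]
  rw [integral_prod_mul (fun x => ev k x) (fun x => starRingEnd ℂ (ev k x)), integral_conj,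
    Complex.mul_conj, Complex.normSq_eq_norm_sq]

section p2
variable {K L : Type*} [Field K] [Countable K] [Infinite K] [Field L] [Countable L] [Infinite L]
    [TopologicalSpace K] [DiscreteTopology K] [TopologicalSpace L] [DiscreteTopology L]
    [MeasurableSpace (AddDual K)] [BorelSpace (AddDual K)]
    [MeasurableSpace (AddDual L)] [BorelSpace (AddDual L)]

/-- the difference map -/
def dT (κ : K ≃+* L) (b : L) (p : AddDual K × AddDual L) : AddDual K :=
  p.1 * (dualComp κ.toAddEquiv.toAddMonoidHom (dualSmul b p.2))⁻¹

theorem ev_dT (κ : K ≃+* L) (b : L) (p : AddDual K × AddDual L) (k : K) :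
    ev k (dT κ b p) = ev k p.1 * ev (-(b * κ k)) p.2 := by
  rw [dT, ev_mul, ev_inv, ev_dualComp, ev_dualSmul]
  simp

theorem measurable_dT (κ : K ≃+* L) (b : L) : Measurable (dT κ b) := by
  have : Continuous fun x : AddDual L => dualComp κ.toAddEquiv.toAddMonoidHom (dualSmul b x) :=
    (continuous_dualComp _).comp (continuous_dualSmul _)
  exact measurable_fst.mul (this.measurable.comp measurable_snd).inv

theorem dualSmul_one_char (a : K) : dualSmul a (1 : AddDual K) = 1 := ev_ext fun b => by
  rw [ev_dualSmul, ev_one, ev_one]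

theorem dualSmul_eq_one (a : K) (ha : a ≠ 0) (ξ : AddDual K) : dualSmul a ξ = 1 ↔ ξ = 1 := by
  constructor
  · intro h
    have := congrArg (dualSmul a⁻¹) h
    rwa [dualSmul_dualSmul, inv_mul_cancel₀ ha, dualSmul_one, dualSmul_one_char] at this
  · rintro rfl
    exact dualSmul_one_char a

theorem dualSmul_inj {a b : K} {ξ : AddDual K} (hξ : ξ ≠ 1) (h : dualSmul a ξ = dualSmul b ξ) : a = b := by
  by_contra hne
  apply hξ
  rw [← dualSmul_eq_one (a - b) (sub_ne_zero.2 hne)]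
  refine ev_ext fun c => ?_
  have := congrArg (ev c) h
  rw [ev_dualSmul, ev_dualSmul] at this
  rw [ev_dualSmul, ev_one, sub_mul, sub_eq_add_neg, ev_add, this, ← ev_add, add_neg_cancel, ev_zero]

theorem dT_act (κ : K ≃+* L) (b : L) (k : K) (r v : L) (hv : v ≠ 0) (hk : κ k = v * r)
    (p : AddDual K × AddDual L) :
    dT κ b (Prod.map (dualSmul k) (dualSmul r) p) = dualSmul k (dT κ (b * v⁻¹) p) := by
  refine ev_ext fun j => ?_
  rw [ev_dualSmul, ev_dT, ev_dT]
  simp only [Prod.map_fst, Prod.map_snd, ev_dualSmul]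
  congr 2
  rw [map_mul, hk]
  field_simp

def dZ (κ : K ≃+* L) (b : L) : Set (AddDual K × AddDual L) := {p | dT κ b p = 1 ∧ p.2 ≠ 1}

theorem measurableSet_dZ (κ : K ≃+* L) (b : L) : MeasurableSet (dZ κ b) :=
  (measurable_dT κ b (measurableSet_singleton 1)).inter
    (measurable_snd (measurableSet_singleton (1 : AddDual L)).compl)

theorem dZ_act (κ : K ≃+* L) (b : L) (k : K) (r v : L) (hk0 : k ≠ 0) (hr : r ≠ 0) (hv : v ≠ 0) (hk : κ k = v * r) :
    Prod.map (dualSmul k) (dualSmul r) ⁻¹' (dZ κ b) = dZ κ (b * v⁻¹) := by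
  ext p
  simp only [Set.mem_preimage, dZ, Set.mem_ofPred_eq]
  rw [dT_act κ b k r v hv hk, dualSmul_eq_one k hk0, Prod.map_snd, Ne, dualSmul_eq_one r hr]

theorem dZ_disj (κ : K ≃+* L) (b b' : L) (h : b ≠ b') : Disjoint (dZ κ b) (dZ κ b') := by
  rw [Set.disjoint_left]
  rintro p ⟨h1, h2⟩ ⟨h3, -⟩
  apply h
  apply dualSmul_inj h2
  refine ev_ext fun c => ?_
  obtain ⟨k, rfl⟩ := κ.surjective c
  have e1 := congrArg (ev k) (h1.trans h3.symm)
  rw [ev_dT, ev_dT] at e1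
  have hne : ev k p.1 ≠ 0 := by
    intro h0
    have := norm_ev k p.1
    rw [h0] at this; simp at this
  have e2 := mul_left_cancel₀ hne e1
  rw [ev_neg, ev_neg] at e2
  rw [ev_dualSmul, ev_dualSmul]
  exact (starRingEnd ℂ).injective e2

theorem ev_on_dZ (κ : K ≃+* L) (b : L) (p : AddDual K × AddDual L) (hp : p ∈ dZ κ b) (a : K) :
    ev a p.1 = ev (b * κ a) p.2 := by
  have h := congrArg (ev a) hp.1
  rw [ev_dT, ev_one] at h
  have h2 : ev (-(b * κ a)) p.2 * ev (b * κ a) p.2 = 1 := by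
    rw [← ev_add, neg_add_cancel, ev_zero]
  calc ev a p.1 = ev a p.1 * (ev (-(b * κ a)) p.2 * ev (b * κ a) p.2) := by rw [h2, mul_one]
    _ = _ := by rw [← mul_assoc, h, one_mul]

theorem dT_coeff (ρ : Kˣ ≃* Lˣ) (w : Kˣ →* Lˣ) (κ : K ≃+* L)
    (hκ : ∀ x : Kˣ, κ (x : K) = ((w x : L)) * ((ρ x : Lˣ) : L))
    (θ : Measure (AddDual K × AddDual L))
    (hinv : ∀ a : Kˣ, θ.map (Prod.map (dualSmul (a : K)) (dualSmul ((ρ a : Lˣ) : L))) = θ)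
    (b : Lˣ) (k : Kˣ) :
    ∫ x, ev (k : K) x ∂(θ.map (dT κ b)) = fc θ 1 (-((b * w k : Lˣ) : L)) := by
  rw [integral_map (measurable_dT κ _).aemeasurable (continuous_ev _).aestronglyMeasurable]
  simp only [ev_dT]
  rw [← fc_inv θ _ _ (hinv k)]
  rw [fc, hκ, Units.val_mul]
  congr 1; ext p
  rw [mul_one]
  congr 2
  ring

theorem exists_atom_b (mK : Measure (AddDual K)) [mK.IsHaarMeasure] [IsProbabilityMeasure mK]
    (ρ : Kˣ ≃* Lˣ) (w : Kˣ →* Lˣ) (hw : (Set.range w).Finite) (κ : K ≃+* L)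
    (hκ : ∀ x : Kˣ, κ (x : K) = ((w x : L)) * ((ρ x : Lˣ) : L))
    (θ : Measure (AddDual K × AddDual L))
    (h1 : θ.map Prod.fst = mK)
    (hinv : ∀ a : Kˣ, θ.map (Prod.map (dualSmul (a : K)) (dualSmul ((ρ a : Lˣ) : L))) = θ)
    (b : Lˣ) (hb : fc θ 1 (-(b : L)) ≠ 0) :
    ∃ (b' : Lˣ) (ζ : AddDual K), θ.map (dT κ b') {ζ} ≠ 0 := by
  have hθp := prob_of_map_fst θ mK h1
  have hp : ∀ b : L, IsProbabilityMeasure (θ.map (dT κ b)) := fun b =>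
    Measure.isProbabilityMeasure_map (measurable_dT κ b).aemeasurable
  have hmeas : Measurable (fun p : AddDual K × AddDual K => p.1 * p.2⁻¹) := by fun_prop
  let ν : Lˣ → Measure (AddDual K) := fun c =>
    ((θ.map (dT κ ((b * c : Lˣ) : L))).prod (θ.map (dT κ ((b * c : Lˣ) : L)))).map (fun p => p.1 * p.2⁻¹)
  have hν : ∀ c, IsProbabilityMeasure (ν c) := fun c =>
    Measure.isProbabilityMeasure_map hmeas.aemeasurable
  set t : ℝ := ∑ c ∈ hw.toFinset, ‖fc θ 1 (-((b * c : Lˣ) : L))‖ ^ 2 with ht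
  have htpos : 0 < t := by
    refine Finset.sum_pos' (fun c _ => by positivity) ⟨1, ?_, ?_⟩
    · rw [Set.Finite.mem_toFinset]; exact ⟨1, map_one w⟩
    · rw [mul_one]; positivity
  have key := atom_ge mK (∑ c ∈ hw.toFinset, ν c) t htpos.le (by
    intro k hk
    rw [integral_finsetSum_measure fun c _ => integrable_ev _ _]
    have : ∀ c, ∫ x, ev k x ∂(ν c) = ((‖fc θ 1 (-((b * c * w (Units.mk0 k hk) : Lˣ) : L))‖ ^ 2 : ℝ) : ℂ) := by
      intro c
      rw [diff_coeff]
      have := dT_coeff ρ w κ hκ θ hinv (b * c) (Units.mk0 k hk)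
      rw [Units.val_mk0] at this
      rw [this]
    simp_rw [this]
    rw [ht, ← Complex.ofReal_sum]
    congr 1
    refine Finset.sum_bij (fun c _ => c * w (Units.mk0 k hk)) ?_ ?_ ?_ ?_
    · intro c hc
      rw [Set.Finite.mem_toFinset] at hc ⊢
      obtain ⟨x, rfl⟩ := hc
      exact ⟨x * _, map_mul w _ _⟩
    · intro c _ c' _ h
      exact mul_right_cancel h
    · intro c hc
      rw [Set.Finite.mem_toFinset] at hc
      obtain ⟨x, rfl⟩ := hc
      refine ⟨w (x * (Units.mk0 k hk)⁻¹), ?_, ?_⟩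
      · rw [Set.Finite.mem_toFinset]; exact ⟨_, rfl⟩
      · rw [← map_mul, inv_mul_cancel_right]
    · intro c _
      rw [mul_assoc])
  have hpos : (∑ c ∈ hw.toFinset, ν c) {1} ≠ 0 := by
    intro h0
    rw [Measure.real, h0] at key
    simp at key
    linarith
  rw [Measure.finsetSum_apply] at hpos
  obtain ⟨c, _, hc⟩ := Finset.exists_ne_zero_of_sum_ne_zero hpos
  obtain ⟨ζ, hζ⟩ := atom_of_diff _ hc
  exact ⟨b * c, ζ, hζ⟩

theorem atom_is_one (mK : Measure (AddDual K)) [mK.IsHaarMeasure] [IsProbabilityMeasure mK]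
    (ρ : Kˣ ≃* Lˣ) (w : Kˣ →* Lˣ) (hw : (Set.range w).Finite) (κ : K ≃+* L)
    (hκ : ∀ x : Kˣ, κ (x : K) = ((w x : L)) * ((ρ x : Lˣ) : L))
    (θ : Measure (AddDual K × AddDual L))
    (h1 : θ.map Prod.fst = mK)
    (hinv : ∀ a : Kˣ, θ.map (Prod.map (dualSmul (a : K)) (dualSmul ((ρ a : Lˣ) : L))) = θ)
    (b : Lˣ) (ζ : AddDual K) (hζ : θ.map (dT κ b) {ζ} ≠ 0) : ζ = 1 := by
  by_contra hne
  have hθp := prob_of_map_fst θ mK h1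
  have hp : IsProbabilityMeasure (θ.map (dT κ b)) :=
    Measure.isProbabilityMeasure_map (measurable_dT κ b).aemeasurable
  have hinf : ((fun h : Kˣ => dualSmul (h : K) ζ) '' (w.ker : Set Kˣ)).Infinite := by
    refine (infinite_ker w hw).image ?_
    intro x _ y _ h
    exact Units.ext (dualSmul_inj hne h)
  have := hinf.meas_eq_top (μ := θ.map (dT κ b)) ⟨_, hζ, by
    rintro _ ⟨h, hh, rfl⟩
    have hwh : w h = 1 := hh
    rw [Measure.map_apply (measurable_dT κ b) (measurableSet_singleton _),
      Measure.map_apply (measurable_dT κ b) (measurableSet_singleton _)]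
    conv_rhs => rw [← hinv h]
    rw [Measure.map_apply (measurable_pm _ _) (measurable_dT κ b (measurableSet_singleton _))]
    refine measure_mono ?_
    intro p hp
    have hp' : dT κ b p = ζ := hp
    change dT κ b (Prod.map _ _ p) = dualSmul (h : K) ζ
    rw [dT_act κ b (h : K) _ 1 one_ne_zero (by rw [hκ, hwh, Units.val_one]), inv_one, mul_one, hp']⟩
  exact measure_ne_top _ _ this

theorem dZ_coeff (mL : Measure (AddDual L)) [mL.IsHaarMeasure] [IsProbabilityMeasure mL]
    (ρ : Kˣ ≃* Lˣ) (w : Kˣ →* Lˣ) (hw : (Set.range w).Finite) (κ : K ≃+* L)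
    (hκ : ∀ x : Kˣ, κ (x : K) = ((w x : L)) * ((ρ x : Lˣ) : L))
    (θ : Measure (AddDual K × AddDual L))
    (h2 : θ.map Prod.snd = mL)
    (hinv : ∀ a : Kˣ, θ.map (Prod.map (dualSmul (a : K)) (dualSmul ((ρ a : Lˣ) : L))) = θ)
    (b : L) [IsProbabilityMeasure θ] (d : L) (hd : d ≠ 0) :
    ∫ p in dZ κ b, ev d p.2 ∂θ = 0 := by
  set I := ∫ p in dZ κ b, ev d p.2 ∂θ with hI
  have hih : ∀ h ∈ w.ker, ∫ p in dZ κ b, ev (((ρ h : Lˣ) : L) * d) p.2 ∂θ = I := by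
    intro h hh
    have hwh : w h = 1 := hh
    conv_rhs => rw [hI, ← hinv h]
    rw [setIntegral_map (measurableSet_dZ κ b) (by
      exact ((continuous_ev d).comp continuous_snd).aestronglyMeasurable) (measurable_pm _ _).aemeasurable]
    rw [dZ_act κ b h _ 1 h.ne_zero (ρ h).ne_zero one_ne_zero (by rw [hκ, hwh, Units.val_one]), inv_one, mul_one]
    rfl
  have : Infinite w.ker := (infinite_ker w hw).to_subtype
  let s : ℕ → L := fun n => ((ρ (Infinite.natEmbedding w.ker n : Kˣ) : Lˣ) : L) * d
  have hs : Function.Injective s := by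
    intro i j hij
    have := mul_right_cancel₀ hd hij
    exact (Infinite.natEmbedding w.ker).injective (Subtype.ext (ρ.injective (Units.ext this)))
  have hbd : ∀ n : ℕ, 0 < n → ‖I‖ * n ≤ 1 := by
    intro n hn
    have hn' : (0 : ℝ) < n := by exact_mod_cast hn
    obtain ⟨hi, hint⟩ := normsq_sum mL 0 (fun k hk => haar_ev mL k hk) s hs (n ^ 2)
    have hsc : Continuous fun x : AddDual L => ∑ i ∈ Finset.range (n ^ 2), ev (s i) x :=
      continuous_finsetSum _ fun i _ => continuous_ev _
    have e1 : ((n : ℂ) ^ 2) * I = ∫ p in dZ κ b, ∑ i ∈ Finset.range (n ^ 2), ev (s i) p.2 ∂θ := by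
      have hint2 : ∀ i, Integrable (fun p : AddDual K × AddDual L => ev (s i) p.2) (θ.restrict (dZ κ b)) :=
        fun i => integrable_cont _ _ ((continuous_ev _).comp continuous_snd)
      rw [integral_finsetSum _ fun i _ => hint2 i]
      rw [Finset.sum_congr rfl fun i _ => hih _ (Infinite.natEmbedding w.ker i).2]
      simp
    have hn1 : Integrable (fun x => ‖∑ i ∈ Finset.range (n ^ 2), ev (s i) x‖) mL := (integrable_cont mL _ hsc).norm
    have e2 : ‖((n : ℂ) ^ 2) * I‖ ≤ n := by
      rw [e1]
      calc _ ≤ ∫ p in dZ κ b, ‖∑ i ∈ Finset.range (n ^ 2), ev (s i) p.2‖ ∂θ := norm_integral_le_integral_norm _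
        _ ≤ ∫ p, ‖∑ i ∈ Finset.range (n ^ 2), ev (s i) p.2‖ ∂θ := by
          refine setIntegral_le_integral ?_ (Eventually.of_forall fun x => norm_nonneg _)
          exact (integrable_cont θ _ (hsc.comp continuous_snd)).norm
        _ = ∫ x, ‖∑ i ∈ Finset.range (n ^ 2), ev (s i) x‖ ∂mL := by
          rw [← h2, integral_map measurable_snd.aemeasurable hsc.norm.aestronglyMeasurable]
        _ ≤ ∫ x, ((n : ℝ) / 2 + (2 * n : ℝ)⁻¹ * ‖∑ i ∈ Finset.range (n ^ 2), ev (s i) x‖ ^ 2) ∂mL := by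
          refine integral_mono hn1 ((integrable_const _).add (hi.const_mul _)) fun x => ?_
          simp only
          set r := ‖∑ i ∈ Finset.range (n ^ 2), ev (s i) x‖
          rw [← sub_nonneg]
          have : (n : ℝ) / 2 + (2 * n : ℝ)⁻¹ * r ^ 2 - r = (2 * n : ℝ)⁻¹ * (n - r) ^ 2 := by
            field_simp; ring
          rw [this]; positivity
        _ = n := by
          rw [integral_add (integrable_const _) (hi.const_mul _), integral_const_mul, hint]
          simp
          field_simp
          norm_num
    rw [norm_mul, norm_pow, Complex.norm_natCast] at e2
    nlinarith
  by_contra hne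
  have hpos : 0 < ‖I‖ := norm_pos_iff.2 hne
  obtain ⟨n, hn⟩ := exists_nat_gt (1 / ‖I‖)
  have hn0 : 0 < n := by
    have : (0 : ℝ) < n := lt_trans (by positivity) hn
    exact_mod_cast this
  have := hbd n hn0
  rw [div_lt_iff₀ hpos] at hn
  linarith
end p2


section p3
variable {K L : Type*} [Field K] [Countable K] [Infinite K] [Field L] [Countable L] [Infinite L]
    [TopologicalSpace K] [DiscreteTopology K] [TopologicalSpace L] [DiscreteTopology L]
    [MeasurableSpace (AddDual K)] [BorelSpace (AddDual K)]
    [MeasurableSpace (AddDual L)] [BorelSpace (AddDual L)]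

open Classical in
theorem dZ_full_coeff (mL : Measure (AddDual L)) [mL.IsHaarMeasure] [IsProbabilityMeasure mL]
    (ρ : Kˣ ≃* Lˣ) (w : Kˣ →* Lˣ) (hw : (Set.range w).Finite) (κ : K ≃+* L)
    (hκ : ∀ x : Kˣ, κ (x : K) = ((w x : L)) * ((ρ x : Lˣ) : L))
    (θ : Measure (AddDual K × AddDual L)) [IsProbabilityMeasure θ]
    (h2 : θ.map Prod.snd = mL)
    (hinv : ∀ a : Kˣ, θ.map (Prod.map (dualSmul (a : K)) (dualSmul ((ρ a : Lˣ) : L))) = θ)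
    (b : L) (a : K) (d : L) :
    ∫ p in dZ κ b, ev a p.1 * ev d p.2 ∂θ =
      if b * κ a + d = 0 then ((θ.real (dZ κ b) : ℝ) : ℂ) else 0 := by
  rw [setIntegral_congr_fun (g := fun p => ev (b * κ a + d) p.2) (measurableSet_dZ κ b)
    (fun p hp => by simp only [ev_add]; rw [ev_on_dZ κ b p hp a])]
  split_ifs with h
  · rw [h]
    simp [ev_zero]
  · exact dZ_coeff mL ρ w hw κ hκ θ h2 hinv b _ h

open Classical in
theorem rhs_coeff (mL : Measure (AddDual L)) [mL.IsHaarMeasure] [IsProbabilityMeasure mL]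
    (κ : K ≃+* L) (T : Finset Lˣ) (b : Lˣ) (a : K) (d : L) :
    ∫ p, ev a p.1 * ev d p.2 ∂((((T.card : ℝ≥0∞))⁻¹ •
              ∑ c ∈ T, Measure.map
                (fun η : AddDual L =>
                  (dualComp κ.toAddEquiv.toAddMonoidHom η, dualSmul ((c : Lˣ) : L) η)) mL).map
            (Prod.map id (dualSmul ((b : Lˣ) : L)))) =
      ∑ c ∈ T, if κ a + c * (b * d) = 0 then ((((T.card : ℝ≥0∞))⁻¹.toReal : ℝ) : ℂ) else 0 := by
  have hcont : Continuous (fun p : AddDual K × AddDual L => ev a p.1 * ev d p.2) := continuous_ev2 a d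
  have hc2 : Continuous (Prod.map (id : AddDual K → AddDual K) (dualSmul ((b : Lˣ) : L))) :=
    continuous_id.prodMap (continuous_dualSmul _)
  have hc3 : ∀ c : Lˣ, Continuous (fun η : AddDual L =>
      (dualComp κ.toAddEquiv.toAddMonoidHom η, dualSmul ((c : Lˣ) : L) η)) := fun c =>
    (continuous_dualComp _).prodMk (continuous_dualSmul _)
  have hp : ∀ c : Lˣ, IsProbabilityMeasure (Measure.map (fun η : AddDual L =>
      (dualComp κ.toAddEquiv.toAddMonoidHom η, dualSmul ((c : Lˣ) : L) η)) mL) := fun c =>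
    Measure.isProbabilityMeasure_map (hc3 c).measurable.aemeasurable
  have hcc : Continuous (fun p : AddDual K × AddDual L => ev a (Prod.map id (dualSmul ((b : Lˣ) : L)) p).1 *
      ev d (Prod.map id (dualSmul ((b : Lˣ) : L)) p).2) := hcont.comp hc2
  rw [integral_map hc2.measurable.aemeasurable hcont.aestronglyMeasurable,
    integral_smul_measure, integral_finsetSum_measure (fun c _ => integrable_cont _ _ hcc),
    Finset.smul_sum]
  refine Finset.sum_congr rfl fun c _ => ?_
  rw [integral_map (hc3 c).measurable.aemeasurable hcc.aestronglyMeasurable]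
  have : ∀ η : AddDual L, ev a (dualComp κ.toAddEquiv.toAddMonoidHom η) *
      ev d (dualSmul (b : L) (dualSmul (c : L) η)) = ev (κ a + c * (b * d)) η := by
    intro η
    rw [ev_add, ev_dualComp, ev_dualSmul, ev_dualSmul]
    rfl
  simp only [Prod.map_fst, Prod.map_snd, id, this]
  split_ifs with h
  · rw [h]; simp [ev_zero]
  · rw [haar_ev mL _ h, smul_zero]

theorem part2 (mK : Measure (AddDual K)) [mK.IsHaarMeasure] [IsProbabilityMeasure mK]
    (mL : Measure (AddDual L)) [mL.IsHaarMeasure] [IsProbabilityMeasure mL]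
    (ρ : Kˣ ≃* Lˣ) (w : Kˣ →* Lˣ) (hw : (Set.range w).Finite) (κ : K ≃+* L)
    (hκ : ∀ x : Kˣ, κ (x : K) = ((w x : L)) * ((ρ x : Lˣ) : L))
    (θ : Measure (AddDual K × AddDual L))
    (h1 : θ.map Prod.fst = mK) (h2 : θ.map Prod.snd = mL)
    (hinv : ∀ a : Kˣ, θ.map (Prod.map (dualSmul (a : K)) (dualSmul ((ρ a : Lˣ) : L))) = θ)
    (herg : IsErgodicFamily
          (fun a : Kˣ => Prod.map (dualSmul (a : K)) (dualSmul ((ρ a : Lˣ) : L))) θ)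
    (hne : θ ≠ mK.prod mL) :
    ∃ b : Lˣ,
          θ = (((hw.toFinset.card : ℝ≥0∞))⁻¹ •
              ∑ c ∈ hw.toFinset, Measure.map
                (fun η : AddDual L =>
                  (dualComp κ.toAddEquiv.toAddMonoidHom η, dualSmul ((c : Lˣ) : L) η)) mL).map
            (Prod.map id (dualSmul ((b : Lˣ) : L))) := by
  have hθp := prob_of_map_fst θ mK h1
  -- step A
  obtain ⟨b', hb'⟩ : ∃ b' : Lˣ, θ (dZ κ (b' : L)) ≠ 0 := by
    obtain ⟨a, b, ha, hb, hab⟩ := exists_fc_ne mK mL θ h1 h2 hne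
    have e := fc_inv θ _ _ (hinv (Units.mk0 a ha)) 1 (((ρ (Units.mk0 a ha) : Lˣ) : L)⁻¹ * b)
    rw [mul_one, Units.val_mk0, mul_inv_cancel_left₀ (Units.ne_zero _)] at e
    rw [e] at hab
    obtain ⟨b', ζ, hζ⟩ := exists_atom_b mK ρ w hw κ hκ θ h1 hinv
      (-((ρ (Units.mk0 a ha))⁻¹ * Units.mk0 b hb)) (by
        convert hab using 2
        simp)
    have hz := atom_is_one mK ρ w hw κ hκ θ h1 hinv b' ζ hζ
    subst hz
    refine ⟨b', fun h0 => hζ ?_⟩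
    rw [Measure.map_apply (measurable_dT κ _) (measurableSet_singleton _)]
    have hh : θ (Prod.snd ⁻¹' {(1 : AddDual L)}) = 0 := by
      rw [← Measure.map_apply measurable_snd (measurableSet_singleton _), h2, haar_one]
    refine measure_mono_null ?_ (measure_union_null h0 hh)
    intro p hp
    by_cases hp2 : p.2 = 1
    · exact Or.inr hp2
    · exact Or.inl ⟨hp, hp2⟩
  have hmem : ∀ c : Lˣ, c ∈ hw.toFinset ↔ ∃ k, w k = c := fun c => by
    rw [Set.Finite.mem_toFinset]; rfl
  have hact : ∀ (k : Kˣ) (c : Lˣ), Prod.map (dualSmul (k : K)) (dualSmul ((ρ k : Lˣ) : L)) ⁻¹'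
      (dZ κ ((b' * c : Lˣ) : L)) = dZ κ ((b' * (c * (w k)⁻¹) : Lˣ) : L) := by
    intro k c
    rw [dZ_act κ _ (k : K) _ (w k : L) k.ne_zero (ρ k).ne_zero (w k).ne_zero (hκ k)]
    congr 1
    push_cast
    ring
  have heq : ∀ c ∈ hw.toFinset, θ (dZ κ ((b' * c : Lˣ) : L)) = θ (dZ κ (b' : L)) := by
    intro c hc
    obtain ⟨k, rfl⟩ := (hmem c).1 hc
    conv_lhs => rw [← hinv k]
    rw [Measure.map_apply (measurable_pm _ _) (measurableSet_dZ _ _), hact, mul_inv_cancel, mul_one]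
  set S : Set (AddDual K × AddDual L) := ⋃ c ∈ hw.toFinset, dZ κ ((b' * c : Lˣ) : L) with hS
  have hSm : MeasurableSet S := Finset.measurableSet_biUnion _ fun c _ => measurableSet_dZ _ _
  have hdisj : (hw.toFinset : Set Lˣ).PairwiseDisjoint (fun c => dZ κ ((b' * c : Lˣ) : L)) := by
    intro c _ c' _ hcc
    refine dZ_disj κ _ _ fun h => hcc ?_
    exact mul_left_cancel (Units.ext h)
  have hone : (1 : Lˣ) ∈ hw.toFinset := (hmem 1).2 ⟨1, map_one w⟩
  have hS1 : θ S = 1 := by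
    refine (herg S hSm ?_).resolve_left ?_
    · intro k
      ext p
      simp only [hS, Set.preimage_iUnion, hact, Set.mem_iUnion]
      constructor
      · rintro ⟨c, hc, hp⟩
        obtain ⟨x, rfl⟩ := (hmem c).1 hc
        exact ⟨w x * (w k)⁻¹, (hmem _).2 ⟨x * k⁻¹, by simp⟩, hp⟩
      · rintro ⟨c, hc, hp⟩
        obtain ⟨x, rfl⟩ := (hmem c).1 hc
        exact ⟨w x * w k, (hmem _).2 ⟨x * k, by simp⟩, by rwa [mul_inv_cancel_right]⟩
    · intro h0
      apply hb'
      refine measure_mono_null ?_ h0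
      have := Set.subset_biUnion_of_mem (u := fun c => dZ κ ((b' * c : Lˣ) : L)) hone
      rwa [mul_one] at this
  have hcard : θ (dZ κ (b' : L)) = ((hw.toFinset.card : ℝ≥0∞))⁻¹ := by
    rw [hS, measure_biUnion_finset hdisj fun c _ => measurableSet_dZ _ _, Finset.sum_congr rfl heq,
      Finset.sum_const, nsmul_eq_mul, mul_comm] at hS1
    exact ENNReal.eq_inv_of_mul_eq_one_left hS1
  refine ⟨b'⁻¹, ?_⟩
  have hc0 : (hw.toFinset.card : ℝ≥0∞) ≠ 0 := by
    exact_mod_cast (Finset.card_pos.2 ⟨_, hone⟩).ne'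
  have hfin : IsFiniteMeasure ((((hw.toFinset.card : ℝ≥0∞))⁻¹ •
              ∑ c ∈ hw.toFinset, Measure.map
                (fun η : AddDual L =>
                  (dualComp κ.toAddEquiv.toAddMonoidHom η, dualSmul ((c : Lˣ) : L) η)) mL).map
            (Prod.map id (dualSmul ((b'⁻¹ : Lˣ) : L)))) := by
    have : IsFiniteMeasure (((hw.toFinset.card : ℝ≥0∞))⁻¹ •
              ∑ c ∈ hw.toFinset, Measure.map
                (fun η : AddDual L =>
                  (dualComp κ.toAddEquiv.toAddMonoidHom η, dualSmul ((c : Lˣ) : L) η)) mL) :=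
      Measure.smul_finite _ (ENNReal.inv_ne_top.2 hc0)
    infer_instance
  refine measure_ext_ev2 _ _ fun a d => ?_
  rw [rhs_coeff]
  have hae : ∫ p, ev a p.1 * ev d p.2 ∂θ = ∫ p in S, ev a p.1 * ev d p.2 ∂θ := by
    rw [Measure.restrict_eq_self_of_ae_mem]
    rw [← mem_ae_iff_prob_eq_one hSm] at hS1
    exact hS1
  rw [hae, hS, integral_biUnion_finset _ (fun c _ => measurableSet_dZ _ _) hdisj
    (fun c _ => (integrable_cont θ _ (continuous_ev2 a d)).integrableOn)]
  refine Finset.sum_bij (fun c _ => c⁻¹) ?_ ?_ ?_ ?_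
  · intro c hc
    obtain ⟨k, rfl⟩ := (hmem c).1 hc
    exact (hmem _).2 ⟨k⁻¹, map_inv w k⟩
  · intro c _ c' _ h
    exact inv_injective h
  · intro c hc
    obtain ⟨k, rfl⟩ := (hmem c).1 hc
    exact ⟨(w k)⁻¹, (hmem _).2 ⟨k⁻¹, map_inv w k⟩, inv_inv _⟩
  · intro c hc
    rw [dZ_full_coeff mL ρ w hw κ hκ θ h2 hinv, Measure.real, heq c hc, hcard]
    have hiff : ((b' * c : Lˣ) : L) * κ a + d = 0 ↔
        κ a + ((c⁻¹ : Lˣ) : L) * (((b'⁻¹ : Lˣ) : L) * d) = 0 := by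
      have : ((b' * c : Lˣ) : L) * κ a + d = ((b' * c : Lˣ) : L) *
          (κ a + ((c⁻¹ : Lˣ) : L) * (((b'⁻¹ : Lˣ) : L) * d)) := by
        have h3 := b'.ne_zero
        have h4 := c.ne_zero
        push_cast
        field_simp
      rw [this, mul_eq_zero, or_iff_right (Units.ne_zero _)]
    classical
    convert if_congr hiff rfl rfl
end p3

theorem statement0
    {K L : Type*} [Field K] [Countable K] [Infinite K] [Field L] [Countable L] [Infinite L]
    [TopologicalSpace K] [DiscreteTopology K] [TopologicalSpace L] [DiscreteTopology L]
    [MeasurableSpace (AddDual K)] [BorelSpace (AddDual K)]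
    [MeasurableSpace (AddDual L)] [BorelSpace (AddDual L)]
    (mK : Measure (AddDual K)) [mK.IsHaarMeasure] [IsProbabilityMeasure mK]
    (mL : Measure (AddDual L)) [mL.IsHaarMeasure] [IsProbabilityMeasure mL]
    (ρ : Kˣ ≃* Lˣ)
    (hnotdisjoint : ∃ θ : Measure (AddDual K × AddDual L),
      θ.map Prod.fst = mK ∧ θ.map Prod.snd = mL ∧
      (∀ a : Kˣ,
        θ.map (Prod.map (dualSmul (a : K)) (dualSmul ((ρ a : Lˣ) : L))) = θ) ∧
      θ ≠ mK.prod mL) :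
    ∃ (w : Kˣ →* Lˣ) (hw : (Set.range w).Finite) (κ : K ≃+* L),
      (∀ x : Kˣ, κ (x : K) = ((w x : L)) * ((ρ x : Lˣ) : L)) ∧
      ∀ θ : Measure (AddDual K × AddDual L),
        θ.map Prod.fst = mK → θ.map Prod.snd = mL →
        (∀ a : Kˣ,
          θ.map (Prod.map (dualSmul (a : K)) (dualSmul ((ρ a : Lˣ) : L))) = θ) →
        IsErgodicFamily
          (fun a : Kˣ => Prod.map (dualSmul (a : K)) (dualSmul ((ρ a : Lˣ) : L))) θ →
        θ ≠ mK.prod mL →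
        ∃ b : Lˣ,
          θ = (((hw.toFinset.card : ℝ≥0∞))⁻¹ •
              ∑ c ∈ hw.toFinset, Measure.map
                (fun η : AddDual L =>
                  (dualComp κ.toAddEquiv.toAddMonoidHom η, dualSmul ((c : Lˣ) : L) η)) mL).map
            (Prod.map id (dualSmul ((b : Lˣ) : L))) := by
  obtain ⟨θ₀, h1, h2, hinv, hne⟩ := hnotdisjoint
  obtain ⟨w, κ, hw, hκ⟩ := part1 mK mL ρ θ₀ h1 h2 hinv hne
  refine ⟨w, hw, κ, hκ, ?_⟩
  intro θ h1 h2 hinv herg hne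
  exact part2 mK mL ρ w hw κ hκ θ h1 h2 hinv herg hne

end
end

section
/- Let K be a countably infinite field and let (F_n) be a double Følner sequence in K. Then for all additive characters ξ₁, ξ₂ ∈ K̂ with ξ₁ ≠ 1, the Følner–Kloosterman averages satisfy lim_{n→∞} (1/|F_n|) Σ_{a ∈ F_n \ {0}} ξ₁(a) ξ₂(a^{-1}) = 0. -/
open Filter Topology
open scoped Classical

/-- A (additive) Følner sequence in a countable abelian group. -/
def IsAddFolner {A : Type*} [AddCommGroup A] (F : ℕ → Finset A) : Prop :=
  (∀ n, (F n).Nonempty) ∧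
    ∀ a : A, Tendsto
      (fun n => ((F n ∩ (F n).image (· + a)).card : ℝ) / ((F n).card : ℝ)) atTop (𝓝 1)

/-- A double Følner sequence in a field: a Følner sequence for the additive group which is
also asymptotically invariant under multiplication by every nonzero element. -/
def IsDoubleFolner {K : Type*} [Field K] (F : ℕ → Finset K) : Prop :=
  IsAddFolner F ∧
    ∀ a : K, a ≠ 0 → Tendsto
      (fun n => ((F n ∩ (F n).image (a * ·)).card : ℝ) / ((F n).card : ℝ)) atTop (𝓝 1)

/-- Average of a function over a finite set. -/
noncomputable def fkAvg {K : Type*} (F : Finset K) (f : K → ℂ) : ℂ :=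
  (F.card : ℂ)⁻¹ * ∑ a ∈ F, f a

lemma fkAvg_norm_le {K : Type*} (F : Finset K) (f : K → ℂ) (hf : ∀ x, ‖f x‖ ≤ 1) :
    ‖fkAvg F f‖ ≤ 1 := by
  unfold fkAvg
  rw [norm_mul, norm_inv, Complex.norm_natCast]
  have h : ‖∑ a ∈ F, f a‖ ≤ F.card := by
    refine (norm_sum_le _ _).trans ?_
    refine (Finset.sum_le_sum fun i _ => hf i).trans ?_
    simp
  exact inv_mul_le_one_of_le₀ h (by positivity)

lemma fkAvg_inv {K : Type*} (F : Finset K) (hF : F.Nonempty) (σ : K → K)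
    (hσ : Function.Injective σ) (f : K → ℂ) (hf : ∀ x, ‖f x‖ ≤ 1) :
    ‖fkAvg F (fun x => f (σ x)) - fkAvg F f‖ ≤
      2 * (1 - ((F ∩ F.image σ).card : ℝ) / (F.card : ℝ)) := by
  have hpos : (0 : ℝ) < F.card := by exact_mod_cast hF.card_pos
  have h1 : ∑ x ∈ F, f (σ x) = ∑ x ∈ F.image σ, f x := by
    rw [Finset.sum_image]; exact fun a _ b _ h => hσ h
  have hc : (F.image σ).card = F.card := Finset.card_image_of_injective _ hσ
  have h2 := Finset.sum_inter_add_sum_sdiff F (F.image σ) f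
  have h3 := Finset.sum_inter_add_sum_sdiff (F.image σ) F f
  rw [Finset.inter_comm] at h3
  have c2 := Finset.card_inter_add_card_sdiff F (F.image σ)
  have c3 := Finset.card_inter_add_card_sdiff (F.image σ) F
  rw [Finset.inter_comm, hc] at c3
  have bd : ∀ S : Finset K, ‖∑ x ∈ S, f x‖ ≤ S.card := fun S => by
    refine (norm_sum_le _ _).trans ?_
    refine (Finset.sum_le_sum fun i _ => hf i).trans ?_
    simp
  have key : ‖∑ x ∈ F.image σ, f x - ∑ x ∈ F, f x‖ ≤
      2 * ((F.card : ℝ) - (F ∩ F.image σ).card) := by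
    rw [← h2, ← h3]
    have : (∑ x ∈ F ∩ F.image σ, f x + ∑ x ∈ F.image σ \ F, f x) -
      (∑ x ∈ F ∩ F.image σ, f x + ∑ x ∈ F \ F.image σ, f x) =
      ∑ x ∈ F.image σ \ F, f x - ∑ x ∈ F \ F.image σ, f x := by ring
    rw [this]
    refine (norm_sub_le _ _).trans ?_
    have b1 := bd (F.image σ \ F)
    have b2 := bd (F \ F.image σ)
    have c2' : ((F ∩ F.image σ).card : ℝ) + (F \ F.image σ).card = F.card := by exact_mod_cast c2
    have c3' : ((F ∩ F.image σ).card : ℝ) + (F.image σ \ F).card = F.card := by exact_mod_cast c3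
    linarith
  unfold fkAvg
  rw [← mul_sub, h1, norm_mul, norm_inv, Complex.norm_natCast, inv_mul_le_iff₀ hpos]
  refine key.trans (le_of_eq ?_)
  field_simp

lemma fkAvg_cs {K ι : Type*} (F : Finset K) (S : Finset ι) (f : ι → K → ℂ) (c : ι → ℂ)
    (hc : ∀ i, ‖c i‖ ≤ 1) :
    ‖∑ i ∈ S, c i * fkAvg F (f i)‖ ^ 2 ≤
      ∑ i ∈ S, ∑ j ∈ S, ‖fkAvg F (fun x => f i x * (starRingEnd ℂ) (f j x))‖ := by
  rcases F.eq_empty_or_nonempty with rfl | hF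
  · simp [fkAvg]
  have hpos : (0 : ℝ) < F.card := by exact_mod_cast hF.card_pos
  set g : K → ℂ := fun x => ∑ i ∈ S, c i * f i x with hg
  have e1 : ∑ i ∈ S, c i * fkAvg F (f i) = (F.card : ℂ)⁻¹ * ∑ x ∈ F, g x := by
    simp only [fkAvg, hg, Finset.mul_sum]
    rw [Finset.sum_comm]
    refine Finset.sum_congr rfl fun x _ => Finset.sum_congr rfl fun i _ => by ring
  have e2 : (((F.card : ℝ)⁻¹ * ∑ x ∈ F, ‖g x‖ ^ 2 : ℝ) : ℂ) =
      ∑ i ∈ S, ∑ j ∈ S, c i * (starRingEnd ℂ) (c j) *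
        fkAvg F (fun x => f i x * (starRingEnd ℂ) (f j x)) := by
    have : ∀ x, ((‖g x‖ ^ 2 : ℝ) : ℂ) = ∑ i ∈ S, ∑ j ∈ S, c i * (starRingEnd ℂ) (c j) *
        (f i x * (starRingEnd ℂ) (f j x)) := by
      intro x
      rw [Complex.ofReal_pow, ← Complex.mul_conj', hg]
      simp only [map_sum, map_mul, Finset.sum_mul_sum]
      refine Finset.sum_congr rfl fun x _ => Finset.sum_congr rfl fun i _ => by ring
    rw [Complex.ofReal_mul, Complex.ofReal_sum]
    simp only [this, fkAvg, Finset.mul_sum, Complex.ofReal_inv, Complex.ofReal_natCast]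
    rw [Finset.sum_comm]
    refine Finset.sum_congr rfl fun i _ => ?_
    rw [Finset.sum_comm]
    refine Finset.sum_congr rfl fun i _ => Finset.sum_congr rfl fun i _ => by ring
  have h3 : ‖∑ i ∈ S, c i * fkAvg F (f i)‖ ^ 2 ≤ (F.card : ℝ)⁻¹ * ∑ x ∈ F, ‖g x‖ ^ 2 := by
    rw [e1, norm_mul, norm_inv, Complex.norm_natCast, mul_pow]
    have a1 : ‖∑ x ∈ F, g x‖ ^ 2 ≤ (∑ x ∈ F, ‖g x‖) ^ 2 := by
      gcongr; exact norm_sum_le _ _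
    have a2 := sq_sum_le_card_mul_sum_sq (s := F) (f := fun x => ‖g x‖)
    calc ((F.card : ℝ)⁻¹) ^ 2 * ‖∑ x ∈ F, g x‖ ^ 2
        ≤ ((F.card : ℝ)⁻¹) ^ 2 * (F.card * ∑ x ∈ F, ‖g x‖ ^ 2) := by
          gcongr; exact a1.trans a2
      _ = _ := by field_simp
  refine h3.trans ?_
  have h4 : (F.card : ℝ)⁻¹ * ∑ x ∈ F, ‖g x‖ ^ 2 ≤
      ‖(((F.card : ℝ)⁻¹ * ∑ x ∈ F, ‖g x‖ ^ 2 : ℝ) : ℂ)‖ := by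
    rw [Complex.norm_real]; exact le_abs_self _
  refine h4.trans ?_
  rw [e2]
  refine (norm_sum_le _ _).trans (Finset.sum_le_sum fun i _ => ?_)
  refine (norm_sum_le _ _).trans (Finset.sum_le_sum fun j _ => ?_)
  rw [norm_mul, norm_mul, RCLike.norm_conj]
  exact mul_le_of_le_one_left (norm_nonneg _) (mul_le_one₀ (hc i) (norm_nonneg _) (hc j))

/-- Large-sieve type bound in the limit. -/
lemma fk_sieve {K ι : Type*} (F : ℕ → Finset K) (U : Ultrafilter ℕ) (L : (K → ℂ) → ℂ)
    (hL : ∀ f : K → ℂ, (∀ x, ‖f x‖ ≤ 1) → Tendsto (fun n => fkAvg (F n) f) U (𝓝 (L f)))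
    (S : Finset ι) (f : ι → K → ℂ) (hf : ∀ i x, ‖f i x‖ ≤ 1) (ε δ : ℝ) (hε : 0 ≤ ε)
    (h1 : ∀ i ∈ S, ε ≤ ‖L (f i)‖)
    (h2 : ∀ i ∈ S, ∀ j ∈ S, i ≠ j → ‖L (fun x => f i x * (starRingEnd ℂ) (f j x))‖ ≤ δ)
    (hδ : 0 ≤ δ) :
    (S.card : ℝ) * ε ^ 2 ≤ 1 + S.card * δ := by
  rcases S.eq_empty_or_nonempty with rfl | hS
  · simp
  have hpos : (0 : ℝ) < S.card := by exact_mod_cast hS.card_pos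
  have hff : ∀ i j x, ‖f i x * (starRingEnd ℂ) (f j x)‖ ≤ 1 := fun i j x => by
    rw [norm_mul, RCLike.norm_conj]
    exact mul_le_one₀ (hf i x) (norm_nonneg _) (hf j x)
  have hL1 : ∀ f : K → ℂ, (∀ x, ‖f x‖ ≤ 1) → ‖L f‖ ≤ 1 := fun f hf =>
    le_of_tendsto (hL f hf).norm (Eventually.of_forall fun n => fkAvg_norm_le _ _ hf)
  let c : ι → ℂ := fun i => (starRingEnd ℂ) (L (f i)) / ‖L (f i)‖
  have hc : ∀ i, ‖c i‖ ≤ 1 := fun i => by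
    simp only [c, norm_div, RCLike.norm_conj, Complex.norm_real, norm_norm]
    exact div_self_le_one _
  have hcL : ∀ i, c i * L (f i) = ((‖L (f i)‖ : ℝ) : ℂ) := fun i => by
    by_cases h : L (f i) = 0
    · simp [h]
    · have : (‖L (f i)‖ : ℂ) ≠ 0 := by simpa using h
      simp only [c]
      rw [div_mul_eq_mul_div, Complex.conj_mul', sq, mul_div_assoc, div_self this, mul_one]
  have lim1 : Tendsto (fun n => ‖∑ i ∈ S, c i * fkAvg (F n) (f i)‖ ^ 2) U
      (𝓝 (‖∑ i ∈ S, c i * L (f i)‖ ^ 2)) :=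
    ((tendsto_finsetSum _ fun i _ => (hL (f i) (hf i)).const_mul (c i)).norm).pow 2
  have lim2 : Tendsto (fun n => ∑ i ∈ S, ∑ j ∈ S,
      ‖fkAvg (F n) (fun x => f i x * (starRingEnd ℂ) (f j x))‖) U
      (𝓝 (∑ i ∈ S, ∑ j ∈ S, ‖L (fun x => f i x * (starRingEnd ℂ) (f j x))‖)) :=
    tendsto_finsetSum _ fun i _ => tendsto_finsetSum _ fun j _ => (hL _ (hff i j)).norm
  have key := le_of_tendsto_of_tendsto' lim1 lim2 fun n => fkAvg_cs (F n) S f c hc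
  have lo : (S.card * ε) ^ 2 ≤ ‖∑ i ∈ S, c i * L (f i)‖ ^ 2 := by
    simp only [hcL]
    rw [← Complex.ofReal_sum, Complex.norm_real]
    gcongr
    refine le_trans ?_ (le_abs_self _)
    rw [← nsmul_eq_mul]
    exact Finset.card_nsmul_le_sum _ _ _ h1
  have hi : ∑ i ∈ S, ∑ j ∈ S, ‖L (fun x => f i x * (starRingEnd ℂ) (f j x))‖ ≤
      S.card * (1 + S.card * δ) := by
    rw [← nsmul_eq_mul]
    refine Finset.sum_le_card_nsmul _ _ _ fun i hi => ?_
    have : ∀ j ∈ S, ‖L (fun x => f i x * (starRingEnd ℂ) (f j x))‖ ≤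
        (if i = j then 1 else 0) + δ := fun j hj => by
      split_ifs with h
      · have := hL1 _ (hff i j); linarith
      · simpa using h2 i hi j hj h
    refine (Finset.sum_le_sum this).trans ?_
    rw [Finset.sum_add_distrib]
    simp [hi]
  have := lo.trans (key.trans hi)
  have h' : (S.card : ℝ) * (S.card * ε ^ 2) ≤ S.card * (1 + S.card * δ) := by nlinarith
  exact le_of_mul_le_mul_left h' hpos

lemma fk_finite_bad {K : Type*} [Field K] (t v : K) :
    {u : K | (u - v) * (u⁻¹ - v⁻¹) = t ∧ u ≠ 0 ∧ v ≠ 0}.Finite := by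
  open Polynomial in
  let p : K[X] := X ^ 2 + (C ((t - 2) * v) * X + C (v ^ 2))
  have hp : p ≠ 0 := by
    have : p.Monic := by
      apply monic_X_pow_add
      exact (degree_linear_le).trans_lt (by norm_num)
    exact this.ne_zero
  refine (p.roots.toFinset.finite_toSet).subset ?_
  rintro u ⟨h, hu, hv⟩
  simp only [Finset.mem_coe, Multiset.mem_toFinset, Polynomial.mem_roots hp, Polynomial.IsRoot.def]
  simp [p]
  field_simp at h
  linear_combination -h

lemma fk_choose {K : Type*} [Field K] [Infinite K] (B : Set K) (hB : B.Finite) (N : ℕ) :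
    ∃ S : Finset K, S.card = N ∧ (∀ u ∈ S, u ≠ 0) ∧
      ∀ u ∈ S, ∀ v ∈ S, u ≠ v → (u - v) * (u⁻¹ - v⁻¹) ∉ B := by
  induction N with
  | zero => exact ⟨∅, by simp⟩
  | succ N ih =>
    obtain ⟨S, hS, h0, h⟩ := ih
    have fin : ((S : Set K) ∪ {0} ∪ ⋃ v ∈ (S : Set K), ⋃ t ∈ B,
        {u : K | (u - v) * (u⁻¹ - v⁻¹) = t ∧ u ≠ 0 ∧ v ≠ 0}).Finite := by
      refine (S.finite_toSet.union (Set.finite_singleton _)).union ?_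
      exact S.finite_toSet.biUnion fun v _ => hB.biUnion fun t _ => fk_finite_bad t v
    obtain ⟨w, hw⟩ := fin.exists_notMem
    simp only [Set.mem_union, Set.mem_iUnion, not_or, not_exists, Set.mem_ofPred_eq,
      Finset.mem_coe, Set.mem_singleton_iff] at hw
    obtain ⟨⟨hwS, hw0⟩, hw⟩ := hw
    have hwv : ∀ v ∈ S, (w - v) * (w⁻¹ - v⁻¹) ∉ B := fun v hv hb =>
      hw v hv _ hb ⟨rfl, hw0, h0 v hv⟩
    refine ⟨insert w S, by rw [Finset.card_insert_of_notMem hwS, hS], ?_, ?_⟩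
    · intro u hu
      rcases Finset.mem_insert.1 hu with rfl | hu
      exacts [hw0, h0 u hu]
    · intro u hu v hv huv
      rcases Finset.mem_insert.1 hu with rfl | hu' <;>
        rcases Finset.mem_insert.1 hv with rfl | hv'
      · exact absurd rfl huv
      · exact hwv v hv'
      · have := hwv u hu'
        rwa [show (u - v) * (u⁻¹ - v⁻¹) = (v - u) * (v⁻¹ - u⁻¹) by ring]
      · exact h u hu' v hv' huv

theorem statement2
    {K : Type*} [Field K] [Countable K] [Infinite K]
    (F : ℕ → Finset K) (hF : IsDoubleFolner F)
    (ξ₁ ξ₂ : AddChar K Circle) (hξ₁ : ξ₁ ≠ 1) :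
    Tendsto (fun n => (((F n).card : ℂ))⁻¹ *
      ∑ a ∈ (F n).erase 0, ((ξ₁ a : ℂ) * (ξ₂ a⁻¹ : ℂ))) atTop (𝓝 0) := by
  obtain ⟨⟨hne, hadd⟩, hmul⟩ := hF
  rw [tendsto_iff_ultrafilter]
  intro U hU
  have hex : ∀ f : K → ℂ, ∃ l : ℂ, (∀ x, ‖f x‖ ≤ 1) →
      Tendsto (fun n => fkAvg (F n) f) U (𝓝 l) := by
    intro f
    by_cases hf : ∀ x, ‖f x‖ ≤ 1
    · obtain ⟨l, _, hl⟩ := (isCompact_closedBall (0 : ℂ) 1).ultrafilter_le_nhds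
        (U.map fun n => fkAvg (F n) f) (by
          rw [le_principal_iff]
          refine Eventually.of_forall (f := (U : Filter ℕ)) fun n => ?_
          simpa using fkAvg_norm_le (F n) f hf)
      exact ⟨l, fun _ => hl⟩
    · exact ⟨0, fun h => absurd h hf⟩
  choose L hL using hex
  have hinv : ∀ σ : K → K, Function.Injective σ →
      Tendsto (fun n => ((F n ∩ (F n).image σ).card : ℝ) / ((F n).card : ℝ)) atTop (𝓝 1) →
      ∀ f : K → ℂ, (∀ x, ‖f x‖ ≤ 1) → L (fun x => f (σ x)) = L f := by
    intro σ hσ ht f hf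
    have t1 : Tendsto (fun n => 2 * (1 - ((F n ∩ (F n).image σ).card : ℝ) / ((F n).card : ℝ)))
        U (𝓝 0) := by
      have := ((ht.mono_left hU).const_sub 1).const_mul 2
      simpa using this
    have t2 := squeeze_zero_norm (fun n => fkAvg_inv (F n) (hne n) σ hσ f hf) t1
    have t3 := (hL (fun x => f (σ x)) (fun x => hf _)).sub (hL f hf)
    exact sub_eq_zero.1 (tendsto_nhds_unique t3 t2)
  have hinva : ∀ a : K, ∀ f : K → ℂ, (∀ x, ‖f x‖ ≤ 1) → L (fun x => f (x + a)) = L f :=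
    fun a => hinv _ (add_left_injective a) (hadd a)
  have hinvm : ∀ a : K, a ≠ 0 → ∀ f : K → ℂ, (∀ x, ‖f x‖ ≤ 1) → L (fun x => f (a * x)) = L f :=
    fun a ha => hinv _ (mul_right_injective₀ ha) (hmul a ha)
  -- the delta function
  let d : K → K → ℂ := fun a x => if x = a then 1 else 0
  have hd : ∀ a x, ‖d a x‖ ≤ 1 := fun a x => by simp only [d]; split_ifs <;> simp
  have hL0 : L (fun _ => 0) = 0 := by
    have := hL (fun _ => 0) (by simp)
    simp only [fkAvg, Finset.sum_const_zero, mul_zero] at this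
    exact tendsto_nhds_unique this tendsto_const_nhds
  have hd0 : L (d 0) = 0 := by
    by_contra hne0
    have hp : 0 < ‖L (d 0)‖ := norm_pos_iff.2 hne0
    obtain ⟨N, hN⟩ := exists_nat_gt (1 / ‖L (d 0)‖ ^ 2)
    obtain ⟨S, hS⟩ := Infinite.exists_subset_card_eq K N
    have := fk_sieve F U L hL S d hd ‖L (d 0)‖ 0 hp.le (fun i _ => by
        rw [← hinva i (d i) (hd i)]
        simp [d]) (fun i _ j _ hij => by
        have : (fun x => d i x * (starRingEnd ℂ) (d j x)) = fun _ => 0 := by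
          funext x
          simp only [d]
          split_ifs with h1 h2 <;> simp
          exact hij (h1.symm.trans h2)
        rw [this, hL0]; simp) le_rfl
    rw [hS] at this
    rw [div_lt_iff₀ (by positivity)] at hN
    linarith
  -- the functions
  let e : K → K → K → ℂ := fun u v x => (ξ₁ (u * x) : ℂ) * (ξ₂ (v * x⁻¹) : ℂ)
  have he : ∀ u v x, ‖e u v x‖ ≤ 1 := fun u v x => by
    simp only [e, norm_mul, Circle.norm_coe, mul_one, le_refl]
  have hee : ∀ u v u' v', (fun x => e u v x * (starRingEnd ℂ) (e u' v' x)) =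
      e (u - u') (v - v') := by
    intro u v u' v'
    funext x
    simp only [e, map_mul, sub_mul, AddChar.map_sub_eq_div, Circle.coe_mul, div_eq_mul_inv,
      ← Circle.coe_inv_eq_conj, Circle.coe_inv]
    ring
  have he0 : ∀ u, u ≠ 0 → L (e u 0) = 0 := by
    intro u hu
    obtain ⟨b, hb⟩ : ∃ b, ξ₁ b ≠ 1 := by
      by_contra! h
      exact hξ₁ (by ext x; simp [h x])
    have h1 := hinva (u⁻¹ * b) (e u 0) (he u 0)
    have h2 : (fun x => e u 0 (x + u⁻¹ * b)) = fun x => (ξ₁ b : ℂ) * e u 0 x := by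
      funext x
      have : u * (x + u⁻¹ * b) = b + u * x := by field_simp; ring
      simp [e, this, AddChar.map_add_eq_mul]
    have h3 : L (fun x => (ξ₁ b : ℂ) * e u 0 x) = (ξ₁ b : ℂ) * L (e u 0) := by
      have t1 := hL (fun x => (ξ₁ b : ℂ) * e u 0 x) (fun x => by
        rw [norm_mul, Circle.norm_coe, one_mul]; exact he u 0 x)
      have t2 := (hL _ (he u 0)).const_mul (ξ₁ b : ℂ)
      refine tendsto_nhds_unique t1 (t2.congr fun n => ?_)
      simp only [fkAvg, Finset.mul_sum]
      exact Finset.sum_congr rfl fun _ _ => by ring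
    rw [h2, h3] at h1
    have h4 : ((ξ₁ b : ℂ) - 1) * L (e u 0) = 0 := by linear_combination h1
    rcases mul_eq_zero.1 h4 with h | h
    · exact absurd (Circle.ext (by simpa using sub_eq_zero.1 h)) hb
    · exact h
  have hem : ∀ u v, v ≠ 0 → L (e u v) = L (e (u * v) 1) := by
    intro u v hv
    rw [← hinvm v hv (e u v) (he u v)]
    congr 1
    funext x
    simp only [e]
    have h1 : u * (v * x) = u * v * x := by ring
    have h2 : v * (v * x)⁻¹ = 1 * x⁻¹ := by rw [mul_inv]; field_simp
    rw [h1, h2]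
  have hα : L (e 1 1) = 0 := by
    by_contra hne0
    set α := ‖L (e 1 1)‖ with hαdef
    have hp : 0 < α := norm_pos_iff.2 hne0
    set δ := α ^ 2 / 2 with hδ
    have hδp : 0 < δ := by positivity
    have hB : {t : K | δ ≤ ‖L (e t 1)‖}.Finite := by
      by_contra hinf
      obtain ⟨N, hN⟩ := exists_nat_gt (1 / δ ^ 2)
      obtain ⟨S, hSs, hS⟩ := Set.Infinite.exists_subset_card_eq hinf N
      have := fk_sieve F U L hL S (fun t => e t 1) (fun t => he t 1) δ 0 hδp.le
        (fun i hi => hSs hi) (fun i _ j _ hij => by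
          simp only [hee, sub_self]
          rw [he0 _ (sub_ne_zero.2 hij)]; simp) le_rfl
      rw [hS] at this
      rw [div_lt_iff₀ (by positivity)] at hN
      linarith
    obtain ⟨N, hN⟩ := exists_nat_gt (1 / δ)
    obtain ⟨S, hS, hS0, hSB⟩ := fk_choose _ hB N
    have := fk_sieve F U L hL S (fun u => e u u⁻¹) (fun u => he u u⁻¹) α δ hp.le
      (fun i hi => by
        rw [hem _ _ (inv_ne_zero (hS0 i hi)), mul_inv_cancel₀ (hS0 i hi)])
      (fun i hi j hj hij => by
        simp only [hee]
        rw [hem _ _ (sub_ne_zero.2 fun h => hij (inv_injective h))]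
        have := hSB i hi j hj hij
        simp only [Set.mem_ofPred_eq, not_le] at this
        exact this.le) hδp.le
    rw [hS] at this
    rw [div_lt_iff₀ hδp] at hN
    have : (N : ℝ) * α ^ 2 = 2 * (N * δ) := by rw [hδ]; ring
    linarith
  have t1 := (hL _ (he 1 1)).sub (hL _ (hd 0))
  rw [hα, hd0, sub_zero] at t1
  refine t1.congr fun n => ?_
  simp only [fkAvg, ← mul_sub, ← Finset.sum_sub_distrib]
  congr 1
  rw [← Finset.sum_erase (a := (0 : K)) (F n) (by simp [e, d])]
  refine Finset.sum_congr rfl fun x hx => ?_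
  have := Finset.ne_of_mem_erase hx
  simp [e, d, this]
end

section
/- Let K be a countable field and suppose there exists a Følner sequence (F_n) in the additive group (K,+) such that the sequence of inverse sets ((F_n \ {0})^{-1}) is also a Følner sequence in (K,+). Then K is a union of finite subfields (i.e., every element of K lies in a finite subfield of K). -/
open Filter Topology
open scoped Classical

lemma folner_density {A : Type*} [AddCommGroup A] (F : ℕ → Finset A) (hF : IsAddFolner F)
    (S : AddSubgroup A) (b : ℕ → A) (hb : ∀ i j, i < j → b j - b i ∉ S) :
    ∀ᶠ n in atTop, 5 * (((F n).filter (· ∈ S)).card : ℝ) ≤ (F n).card := by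
  have h1 : ∀ᶠ n in atTop, ∀ i ∈ Finset.range 10,
      (9 / 10 : ℝ) < ((F n ∩ (F n).image (· + b i)).card : ℝ) / ((F n).card : ℝ) := by
    rw [Filter.eventually_all_finset]
    intro i _
    exact (hF.2 (b i)).eventually (lt_mem_nhds (by norm_num))
  filter_upwards [h1] with n hn
  have hpos : (0 : ℝ) < (F n).card := by exact_mod_cast (hF.1 n).card_pos
  set G := F n with hG
  have h2 : ∀ i ∈ Finset.range 10, ((G.filter (· ∈ S)).card : ℝ) - (1 / 10) * G.card ≤
      (G.filter (fun x => x - b i ∈ S)).card := by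
    intro i hi
    have h3 := hn i hi
    rw [lt_div_iff₀ hpos] at h3
    have h4 : (G.filter (· ∈ S)).image (· + b i) ⊆
        G.filter (fun x => x - b i ∈ S) ∪ (G.image (· + b i) \ G) := by
      intro x hx
      simp only [Finset.mem_image, Finset.mem_filter, Finset.mem_union, Finset.mem_sdiff] at hx ⊢
      obtain ⟨y, ⟨hy, hyS⟩, rfl⟩ := hx
      by_cases h : y + b i ∈ G
      · left; exact ⟨h, by simpa using hyS⟩
      · right; exact ⟨⟨y, hy, rfl⟩, h⟩
    have h5 := (Finset.card_le_card h4).trans (Finset.card_union_le _ _)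
    rw [Finset.card_image_of_injective _ (add_left_injective (b i))] at h5
    have h6 := Finset.card_sdiff_add_card_inter (G.image (· + b i)) G
    rw [Finset.card_image_of_injective _ (add_left_injective (b i)), Finset.inter_comm] at h6
    have h5' : ((G.filter (· ∈ S)).card : ℝ) ≤ (G.filter (fun x => x - b i ∈ S)).card +
      (G.image (· + b i) \ G).card := by exact_mod_cast h5
    have h6' : ((G.image (· + b i) \ G).card : ℝ) + (G ∩ G.image (· + b i)).card = G.card := by
      exact_mod_cast h6
    linarith
  have h7 : ∑ i ∈ Finset.range 10, (G.filter (fun x => x - b i ∈ S)).card ≤ G.card := by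
    rw [← Finset.card_biUnion]
    · apply Finset.card_le_card
      intro x hx
      simp only [Finset.mem_biUnion, Finset.mem_filter] at hx
      obtain ⟨_, _, h, _⟩ := hx
      exact h
    · intro i _ j _ hij
      refine Finset.disjoint_left.2 ?_
      intro x hx hx'
      rw [Finset.mem_filter] at hx hx'
      rcases lt_or_gt_of_ne hij with h | h
      · apply hb i j h
        have := S.sub_mem hx.2 hx'.2
        simpa using this
      · apply hb j i h
        have := S.sub_mem hx'.2 hx.2
        simpa using this
  have h8 := Finset.sum_le_sum h2
  have h7' : ∑ i ∈ Finset.range 10, ((G.filter (fun x => x - b i ∈ S)).card : ℝ) ≤ G.card := by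
    exact_mod_cast h7
  rw [Finset.sum_const, Finset.card_range, nsmul_eq_mul] at h8
  push_cast at h8
  linarith

lemma valuation_trivial {K : Type*} [Field K]
    (F : ℕ → Finset K) (hF : IsAddFolner F)
    (hFinv : IsAddFolner (fun n => ((F n).erase 0).image (·⁻¹)))
    (V : ValuationSubring K) (c : K) : c ∈ V := by
  by_contra hc
  have hc0 : c ≠ 0 := fun h => hc (h ▸ V.zero_mem)
  have ha : c⁻¹ ∈ V := (V.mem_or_inv_mem c).resolve_left hc
  have hb : ∀ i j, i < j → c ^ j - c ^ i ∉ V.toSubring.toAddSubgroup := by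
    intro i j hij h
    apply hc
    have h : c ^ j - c ^ i ∈ V := h
    obtain ⟨k, rfl⟩ := Nat.exists_eq_add_of_lt hij
    have h2 := V.add_mem _ _ (V.mul_mem _ _ h (pow_mem ha (i + k))) (pow_mem ha k)
    have h3 : (c ^ (i + k + 1) - c ^ i) * c⁻¹ ^ (i + k) + c⁻¹ ^ k = c := by
      have h4 : c ^ (i + k) * c⁻¹ ^ (i + k) = 1 := by
        rw [← mul_pow, mul_inv_cancel₀ hc0, one_pow]
      have h5 : c ^ i * c⁻¹ ^ i = 1 := by
        rw [← mul_pow, mul_inv_cancel₀ hc0, one_pow]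
      calc _ = c * (c ^ (i + k) * c⁻¹ ^ (i + k)) - (c ^ i * c⁻¹ ^ i) * c⁻¹ ^ k + c⁻¹ ^ k := by
            ring
        _ = c := by rw [h4, h5]; ring
    rwa [h3] at h2
  obtain ⟨n, h1, h2⟩ := ((folner_density F hF V.toSubring.toAddSubgroup _ hb).and
    (folner_density _ hFinv V.toSubring.toAddSubgroup _ hb)).exists
  have hpos := (hFinv.1 n).card_pos
  simp only at h1 h2 hpos
  set G := ((F n).erase 0).image (·⁻¹) with hG
  have hcard : G.card = ((F n).erase 0).card := Finset.card_image_of_injective _ inv_injective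
  have h3 : (F n).card ≤ G.card + 1 := by
    rw [hcard]
    have := Finset.pred_card_le_card_erase (s := F n) (a := 0)
    omega
  have h4 : G ⊆ ((F n).filter (· ∈ V.toSubring.toAddSubgroup)).image (·⁻¹) ∪
      G.filter (· ∈ V.toSubring.toAddSubgroup) := by
    intro x hx
    rw [Finset.mem_union, Finset.mem_filter]
    rcases V.mem_or_inv_mem x with h | h
    · right; exact ⟨hx, h⟩
    · left
      rw [hG, Finset.mem_image] at hx
      obtain ⟨y, hy, rfl⟩ := hx
      exact Finset.mem_image_of_mem _
        (Finset.mem_filter.2 ⟨Finset.mem_of_mem_erase hy, by simpa using h⟩)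
  have h5 := (Finset.card_le_card h4).trans (Finset.card_union_le _ _)
  have h6 := Finset.card_image_le (s := (F n).filter (· ∈ V.toSubring.toAddSubgroup))
    (f := fun x => x⁻¹)
  have h1' : 5 * ((F n).filter (· ∈ V.toSubring.toAddSubgroup)).card ≤ (F n).card := by
    exact_mod_cast h1
  have h2' : 5 * (G.filter (· ∈ V.toSubring.toAddSubgroup)).card ≤ G.card := by
    exact_mod_cast h2
  omega

lemma subring_inv_mem {K : Type*} [Field K]
    (hV : ∀ (V : ValuationSubring K) (c : K), c ∈ V) (R : Subring K) (y : K) (hy : y ∈ R)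
    (hy0 : y ≠ 0) : y⁻¹ ∈ R := by
  by_contra h
  have hI : Ideal.span {(⟨y, hy⟩ : R)} ≠ ⊤ := by
    rw [Ne, Ideal.span_singleton_eq_top, isUnit_iff_exists_inv]
    rintro ⟨⟨z, hz⟩, h1⟩
    apply h
    have h2 : y * z = 1 := congrArg Subtype.val h1
    rwa [inv_eq_of_mul_eq_one_right h2]
  obtain ⟨B, _, hB⟩ := Ideal.image_subset_nonunits_valuationSubring _ hI
  have h1 : y ∈ B.nonunits :=
    hB ⟨⟨y, hy⟩, Ideal.subset_span (Set.mem_singleton _), rfl⟩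
  rw [ValuationSubring.mem_nonunits_iff] at h1
  have h2 := (B.valuation_le_one_iff _).2 (hV B y⁻¹)
  rw [map_inv₀] at h2
  have h3 : B.valuation y ≠ 0 := by simpa using hy0
  exact absurd ((inv_le_one₀ (zero_lt_iff.2 h3)).1 h2) (not_le.2 h1)

/-- If a countable field `K` admits an additive Følner sequence `(F_n)` such that the
sequence of inverse sets `((F_n \ {0})⁻¹)` is also an additive Følner sequence, then `K`
is a union of finite subfields. -/
theorem statement3
    {K : Type*} [Field K] [Countable K]
    (F : ℕ → Finset K) (hF : IsAddFolner F)
    (hFinv : IsAddFolner (fun n => ((F n).erase 0).image (·⁻¹))) :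
    ∀ x : K, ∃ S : Subfield K, (S : Set K).Finite ∧ x ∈ S := by
  have hV := valuation_trivial F hF hFinv
  intro x
  obtain ⟨p, hp⟩ := CharP.exists K
  rcases CharP.char_is_prime_or_zero K p with hpp | rfl
  · have : Fact p.Prime := ⟨hpp⟩
    let : Algebra (ZMod p) K := ZMod.algebra K p
    have hx : IsAlgebraic (ZMod p) x := by
      by_cases hx0 : x = 0
      · rw [hx0]; exact isAlgebraic_zero
      have h := subring_inv_mem hV (Algebra.adjoin (ZMod p) {x}).toSubring x
        (Algebra.subset_adjoin (Set.mem_singleton x)) hx0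
      have h : x⁻¹ ∈ Algebra.adjoin (ZMod p) {x} := h
      rw [Algebra.adjoin_singleton_eq_range_aeval] at h
      obtain ⟨q, hq⟩ := h
      have hq : Polynomial.aeval x q = x⁻¹ := hq
      refine ⟨Polynomial.X * q - 1, ?_, by simp [hq, hx0]⟩
      intro h0
      have := congrArg (Polynomial.eval 0) h0
      simp at this
    have := IntermediateField.adjoin.finiteDimensional hx.isIntegral
    have : Finite (IntermediateField.adjoin (ZMod p) {x}) := Module.finite_of_finite (ZMod p)
    exact ⟨(IntermediateField.adjoin (ZMod p) {x}).toSubfield, Set.toFinite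
      ((IntermediateField.adjoin (ZMod p) {x} : IntermediateField (ZMod p) K) : Set K),
      IntermediateField.mem_adjoin_simple_self _ x⟩
  · exfalso
    have : CharZero K := CharP.charP_to_charZero K
    obtain ⟨m, hm⟩ := subring_inv_mem hV (Int.castRingHom K).range 2 ⟨2, by simp⟩ two_ne_zero
    have h1 : (m : K) * 2 = 1 := by
      have : (m : K) = 2⁻¹ := hm
      rw [this]; simp
    have h2 : m * 2 = 1 := by exact_mod_cast h1
    omega
end

section
/- Let K be a countable subfield of ℝ. Then for every continuous character ξ of the additive group (ℝ,+) and every double Følner sequence (F_n) in K, the sequence u_n = (1/|F_n|) Σ_{a ∈ F_n \ {0}} ξ(a^{-1}) does not converge to 0 as n → ∞. -/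
open Filter Topology
open scoped Classical

/-- Bounded elements have small density along an additive Følner sequence. -/
lemma bounded_density (K : Subfield ℝ) (F : ℕ → Finset K) (hF : IsAddFolner F) (N : ℕ) :
    ∀ᶠ n in atTop, 8 * ((((F n).filter (fun a : K => |(a : ℝ)| ≤ N)).card : ℕ) : ℝ)
      ≤ ((F n).card : ℝ) := by
  obtain ⟨c, hc⟩ : ∃ c : ℕ → K, ∀ j, ((c j : K) : ℝ) = (j : ℝ) * (2 * N + 1) :=
    ⟨fun j => ((j * (2 * N + 1) : ℕ) : K), fun j => by push_cast; rfl⟩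
  have h1 : ∀ᶠ n in atTop, ∀ j ∈ Finset.range 16,
      (15 / 16 : ℝ) < ((F n ∩ (F n).image (· + c j)).card : ℝ)
        / ((F n).card : ℝ) := by
    rw [Filter.eventually_all_finset]
    intro j _
    have h0 := (hF.2 (c j)).eventually_const_lt (show (15 / 16 : ℝ) < 1 by norm_num)
    filter_upwards [h0] with n hn
    refine lt_of_lt_of_eq hn ?_
    congr!
  filter_upwards [h1] with n hn
  have hpos : (0 : ℝ) < (F n).card := by exact_mod_cast (hF.1 n).card_pos
  set B := (F n).filter (fun a : K => |(a : ℝ)| ≤ N) with hB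
  have hcard : ∀ j ∈ Finset.range 16,
      (B.card : ℝ) - (F n).card / 16 ≤ ((B.image (· + c j) ∩ F n).card : ℝ) := by
    intro j hj
    have h2 := hn j hj
    rw [lt_div_iff₀ hpos] at h2
    have e1 : (B.image (· + c j)).card = B.card :=
      Finset.card_image_of_injective _ (add_left_injective _)
    have e2 : ((F n).image (· + c j)).card = (F n).card :=
      Finset.card_image_of_injective _ (add_left_injective _)
    have e3 := Finset.card_sdiff_add_card_inter (B.image (· + c j)) (F n)
    have e4 := Finset.card_sdiff_add_card_inter ((F n).image (· + c j)) (F n)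
    have e5 : (B.image (· + c j) \ F n).card ≤ ((F n).image (· + c j) \ F n).card :=
      Finset.card_le_card (Finset.sdiff_subset_sdiff
        (Finset.image_subset_image (Finset.filter_subset _ _)) (Finset.Subset.refl _))
    rw [Finset.inter_comm] at h2
    change _ < (((F n).image (· + c j) ∩ F n).card : ℝ) at h2
    rw [e1] at e3
    rw [e2] at e4
    have e3' : ((B.image (· + c j) \ F n).card : ℝ) + ((B.image (· + c j) ∩ F n).card : ℝ)
      = B.card := by exact_mod_cast e3
    have e4' : (((F n).image (· + c j) \ F n).card : ℝ)
      + (((F n).image (· + c j) ∩ F n).card : ℝ) = (F n).card := by exact_mod_cast e4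
    have e5' : ((B.image (· + c j) \ F n).card : ℝ) ≤ (((F n).image (· + c j) \ F n).card : ℝ) := by
      exact_mod_cast e5
    linarith
  have hdisj : ∀ i ∈ Finset.range 16, ∀ j ∈ Finset.range 16, i ≠ j →
      Disjoint (B.image (· + c i) ∩ F n) (B.image (· + c j) ∩ F n) := by
    intro i _ j _ hij
    rw [Finset.disjoint_left]
    intro x hx hy
    simp only [Finset.mem_inter, Finset.mem_image] at hx hy
    obtain ⟨⟨a, ha, rfl⟩, _⟩ := hx
    obtain ⟨⟨b, hb, hab⟩, _⟩ := hy
    have ha' := abs_le.1 (Finset.mem_filter.1 ha).2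
    have hb' := abs_le.1 (Finset.mem_filter.1 hb).2
    have hab' : (b : ℝ) + (j : ℝ) * (2 * N + 1) = a + (i : ℝ) * (2 * N + 1) := by
      have := congrArg (fun z : K => (z : ℝ)) hab
      simpa [hc] using this
    have hN : (0 : ℝ) ≤ N := Nat.cast_nonneg N
    rcases lt_or_gt_of_ne hij with h | h
    · have h' : (i : ℝ) + 1 ≤ j := by exact_mod_cast h
      nlinarith
    · have h' : (j : ℝ) + 1 ≤ i := by exact_mod_cast h
      nlinarith
  have hle : ∑ j ∈ Finset.range 16, (B.image (· + c j) ∩ F n).card ≤ (F n).card := by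
    rw [← Finset.card_biUnion hdisj]
    apply Finset.card_le_card
    intro x hx
    obtain ⟨j, _, hj⟩ := Finset.mem_biUnion.1 hx
    exact (Finset.mem_inter.1 hj).2
  have hle' : ∑ j ∈ Finset.range 16, ((B.image (· + c j) ∩ F n).card : ℝ) ≤ (F n).card := by
    exact_mod_cast hle
  have hs := Finset.sum_le_sum hcard
  rw [Finset.sum_const, Finset.card_range, nsmul_eq_mul] at hs
  push_cast at hs
  linarith

/-- For a countable subfield `K` of `ℝ`, a continuous character `ξ` of `(ℝ,+)` and a double
Følner sequence `(F_n)` in `K`, the averages `(1/|F_n|) ∑_{a ∈ F_n \ {0}} ξ(a⁻¹)` do not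
converge to `0`. -/
theorem statement4
    (K : Subfield ℝ) [Countable K]
    (ξ : ℝ → Circle) (hξcont : Continuous ξ)
    (hξhom : ∀ s t : ℝ, ξ (s + t) = ξ s * ξ t)
    (F : ℕ → Finset K) (hF : IsDoubleFolner F) :
    ¬ Tendsto (fun n => (((F n).card : ℂ))⁻¹ *
        ∑ a ∈ (F n).erase 0, (ξ ((a⁻¹ : K) : ℝ) : ℂ)) atTop (𝓝 0) := by
  intro hlim
  have hξ0 : ξ 0 = 1 := by
    have := hξhom 0 0
    rw [add_zero] at this
    exact (left_eq_mul.1 this)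
  have hc : Continuous (fun t : ℝ => (ξ t : ℂ)) := continuous_subtype_val.comp hξcont
  obtain ⟨δ, hδ, hδ'⟩ := Metric.continuous_iff.1 hc 0 (1 / 4) (by norm_num)
  obtain ⟨N, hN⟩ := exists_nat_gt (1 / δ)
  have hev := hlim.eventually (Metric.ball_mem_nhds 0 (show (0 : ℝ) < 1 / 2 by norm_num))
  obtain ⟨n, hn1, hn2⟩ := (hev.and (bounded_density K F hF.1 N)).exists
  have hposN : 0 < (F n).card := (hF.1.1 n).card_pos
  have hpos : (0 : ℝ) < (F n).card := by exact_mod_cast hposN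
  have hposC : ((F n).card : ℂ) ≠ 0 := by exact_mod_cast hposN.ne'
  let g : K → ℂ := fun a => if a = 0 then 0 else (ξ ((a⁻¹ : K) : ℝ) : ℂ)
  have hsum : ∑ a ∈ (F n).erase 0, (ξ ((a⁻¹ : K) : ℝ) : ℂ) = ∑ a ∈ F n, g a := by
    rw [← Finset.sum_erase (F n) (f := g) (a := 0) (by simp [g])]
    apply Finset.sum_congr rfl
    intro a ha
    simp [g, (Finset.mem_erase.1 ha).1]
  have hg : ∀ a ∈ F n, ‖g a - 1‖ ≤ (if |(a : ℝ)| ≤ N then 2 else 0) + 1 / 4 := by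
    intro a _
    by_cases h : |(a : ℝ)| ≤ N
    · rw [if_pos h]
      have h1 : ‖g a‖ ≤ 1 := by
        by_cases h0 : a = 0
        · simp [g, h0]
        · simp only [g, if_neg h0]
          exact (Circle.norm_coe _).le
      have := norm_sub_le (g a) 1
      rw [norm_one] at this
      linarith
    · rw [if_neg h]
      push Not at h
      have hNpos : (0 : ℝ) < N := lt_trans (by positivity) hN
      have h0 : a ≠ 0 := by
        rintro rfl
        simp at h
        linarith
      have h2 : dist ((a⁻¹ : K) : ℝ) 0 < δ := by
        rw [Real.dist_eq, sub_zero]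
        have : ((a⁻¹ : K) : ℝ) = (a : ℝ)⁻¹ := by simp
        rw [this, abs_inv]
        apply inv_lt_of_inv_lt₀ hδ
        rw [← one_div]
        linarith
      have h3 := hδ' _ h2
      rw [hξ0, Circle.coe_one, Complex.dist_eq] at h3
      simp only [g, if_neg h0]
      linarith
  have hb : ‖∑ a ∈ F n, g a - (F n).card‖ ≤ (F n).card / 2 := by
    have e : ∑ a ∈ F n, g a - (F n).card = ∑ a ∈ F n, (g a - 1) := by
      simp [Finset.sum_sub_distrib]
    rw [e]
    refine (norm_sum_le_of_le _ hg).trans ?_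
    rw [Finset.sum_add_distrib, ← Finset.sum_filter, Finset.sum_const, Finset.sum_const,
      nsmul_eq_mul, nsmul_eq_mul]
    linarith
  simp only [dist_zero_right] at hn1
  rw [hsum, norm_mul, norm_inv, Complex.norm_natCast, inv_mul_lt_iff₀ hpos] at hn1
  have h5 := norm_sub_norm_le ((F n).card : ℂ) (∑ a ∈ F n, g a)
  rw [norm_sub_rev, Complex.norm_natCast] at h5
  linarith
end
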